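/- Let n ≥ 1, let U ⊂ ℝ^n be a nonempty open, bounded, connected set, and let u ∈ W^{1,∞}(U,ℝ^n) be essentially injective with diam(u(U)) ≤ d and 0 < λ ≤ det Du(x) for a.e. x ∈ U. Then there exists a bounded Lipschitz map S : U → ℝ^n that is essentially injective and measure preserving such that ∫_U |u(x) − S(x)| dx ≤ 10 (d/λ^{1/n})(1 + 1/λ) · ∫_U |1 − det Du(x)| dx. -/

import Mathlib

open MeasureTheory Metric Set Bornology

noncomputable section

/-- The Jacobian determinant of `u` at `x` (junk value if `u` is not differentiable at `x`). -/
def detD {n : ℕ} (u : EuclideanSpace ℝ (Fin n) → EuclideanSpace ℝ (Fin n))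
    (x : EuclideanSpace ℝ (Fin n)) : ℝ :=
  LinearMap.det ((fderiv ℝ u x).toLinearMap)

/-- The multiplicity `mult_U(u)`: essential supremum of the counting function
`y ↦ #(U ∩ u⁻¹{y})`. -/
def multOn {n : ℕ} (U : Set (EuclideanSpace ℝ (Fin n)))
    (u : EuclideanSpace ℝ (Fin n) → EuclideanSpace ℝ (Fin n)) : ℕ∞ :=
  essSup (fun y => (U ∩ u ⁻¹' {y}).encard) volume

/-!
Let `2 ≤ n`, let `d` bound the diameter of `u '' U`, and let `m = ∫ (1 - |det Du|)⁺`. If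
`∫ |1 - det Du| = 0`, then `S = u`. Otherwise divide space into coarse cubes and each of these into
equally many fine cubes, so fine that `u` maps most fine cubes meeting `U` into a single coarse
cube. Injectively assign to each such fine cube a subcube of the coarse cube containing its image,
as long as there is room: by the area formula the volume of the fine cubes in excess is at most
`m`. These are placed in a ball of radius `d / λ ^ (1 / n)`, whose volume is at least `|U|`. The
resulting piecewise translation is at distance at most `2 * (d / λ ^ (1 / n)) * m + ε` from `u` in
`L¹`. (If `λ > 1` the radius is `d`, and `m = 0`.) In dimension at least two, finitely many
disjoint cubes can be moved to any other disjoint positions by composing shears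
`(a, b) ↦ (a, b + f a)`, with an error confined to a thin neighbourhood of the faces: shears
along the first coordinate separate the projections of the cubes, which can then be moved
independently of each other. Shears with `f` Lipschitz are bi-Lipschitz and preserve volume.

In dimension one `S` is a translation: `U` is connected, so the oscillation of `u - id` is the
length of its image, which is at most `∫ |1 - det Du|`.
-/

/-! ### Volume preserving rearrangements of finitely many balls -/

/-- An injective, Lipschitz, measure preserving self-map of the whole space: the class of maps
by which cubes are moved around. -/
structure IsLipschitzRearrangement {X : Type*} [MeasureSpace X] [PseudoEMetricSpace X]
    (S : X → X) : Prop where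
  lipschitz : ∃ K, LipschitzWith K S
  injective : Function.Injective S
  measurePreserving : MeasurePreserving S

namespace IsLipschitzRearrangement

lemma comp {X : Type*} [MeasureSpace X] [PseudoEMetricSpace X] {S T : X → X}
    (hS : IsLipschitzRearrangement S) (hT : IsLipschitzRearrangement T) :
    IsLipschitzRearrangement (S ∘ T) where
  lipschitz :=
    let ⟨_, hKS⟩ := hS.lipschitz
    let ⟨_, hKT⟩ := hT.lipschitz
    ⟨_, hKS.comp hKT⟩
  injective := hS.injective.comp hT.injective
  measurePreserving := hS.measurePreserving.comp hT.measurePreserving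

lemma conj {X Y : Type*} [NormedAddCommGroup X] [NormedSpace ℝ X] [MeasureSpace X] [BorelSpace X]
    [NormedAddCommGroup Y] [NormedSpace ℝ Y] [MeasureSpace Y] [BorelSpace Y]
    {S : Y → Y} (hS : IsLipschitzRearrangement S) (e : X ≃L[ℝ] Y) (he : MeasurePreserving e) :
    IsLipschitzRearrangement (e.symm ∘ S ∘ e) where
  lipschitz :=
    let ⟨_, hK⟩ := hS.lipschitz
    ⟨_, e.symm.lipschitz.comp (hK.comp e.lipschitz)⟩
  injective := e.symm.injective.comp (hS.injective.comp e.injective)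
  measurePreserving :=
    (MeasurePreserving.symm e.toHomeomorph.toMeasurableEquiv he).comp
      (hS.measurePreserving.comp he)

lemma shear {A B : Type*} [NormedAddCommGroup A] [MeasureSpace A] [OpensMeasurableSpace A]
    [SFinite (volume : Measure A)] [NormedAddCommGroup B] [SecondCountableTopology B]
    [MeasureSpace B] [BorelSpace B] [SFinite (volume : Measure B)]
    [(volume : Measure B).IsAddRightInvariant] {f : A → B} {K : NNReal} (hf : LipschitzWith K f) :
    IsLipschitzRearrangement fun p : A × B ↦ (p.1, p.2 + f p.1) where
  lipschitz := ⟨_, LipschitzWith.prod_fst.prodMk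
    (LipschitzWith.prod_snd.add (hf.comp LipschitzWith.prod_fst))⟩
  injective := by
    rintro ⟨a, b⟩ ⟨a', b'⟩ h
    obtain ⟨rfl, h⟩ := Prod.mk.inj h
    exact Prod.ext rfl (add_right_cancel h)
  measurePreserving := MeasurePreserving.skew_product (g := fun a b ↦ b + f a)
    (MeasurePreserving.id _)
    (measurable_snd.add (hf.continuous.measurable.comp measurable_fst))
    (.of_forall fun a ↦ map_add_right_eq_self _ (f a))

end IsLipschitzRearrangement

-- The bound `R` does not depend on `η`, although the Lipschitz constant of `f` does.
lemma exists_lipschitzWith_eq_on_balls {ι X V : Type*} [PseudoMetricSpace X]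
    [NormedAddCommGroup V] [NormedSpace ℝ V] {r : ℝ} {T : Finset ι} {c : ι → X}
    (hc : (T : Set ι).Pairwise fun s t ↦ 2 * r ≤ dist (c s) (c t)) (v : ι → V) :
    ∃ R : ℝ, ∀ η > 0, ∃ f : X → V, (∃ K, LipschitzWith K f) ∧ (∀ x, ‖f x‖ ≤ R) ∧
      ∀ t ∈ T, ∀ x, dist x (c t) ≤ r - η → f x = v t := by
  refine ⟨∑ t ∈ T, ‖v t‖, fun η hη ↦ ?_⟩
  let ψ (t : ι) := thickenedIndicator hη (closedBall (c t) (r - η))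
  refine ⟨fun x ↦ ∑ t ∈ T, ψ t x • v t, ?_, fun x ↦ ?_, fun t ht x hx ↦ ?_⟩
  · choose K hK using fun t ↦ show ∃ K, LipschitzWith K fun x ↦ ψ t x • v t from
      ⟨_, ((ContinuousLinearMap.toSpanSingleton ℝ (v t)).lipschitz.comp
        NNReal.isometry_coe.lipschitz).comp (lipschitzWith_thickenedIndicator hη _)⟩
    simpa only [Finset.sum_fn] using Finset.sum_induction (fun t x ↦ ψ t x • v t)
      (fun f ↦ ∃ K, LipschitzWith K f) (fun _ _ ⟨_, hf⟩ ⟨_, hg⟩ ↦ ⟨_, hf.add hg⟩)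
      ⟨0, LipschitzWith.const 0⟩ fun t _ ↦ ⟨K t, hK t⟩
  · refine (norm_sum_le _ _).trans (Finset.sum_le_sum fun t _ ↦ ?_)
    rw [NNReal.smul_def, norm_smul, NNReal.norm_eq]
    exact mul_le_of_le_one_left (norm_nonneg _) (thickenedIndicator_le_one hη _ x)
  · have ψ_self : ψ t x = 1 := thickenedIndicator_one hη _ hx
    have ψ_ne : ∀ s ∈ T, s ≠ t → ψ s x = 0 := fun s hs hst ↦ by
      refine thickenedIndicator_zero hη _ fun hmem ↦ ?_
      obtain ⟨y, hy, hxy⟩ := mem_thickening_iff.1 hmem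
      rw [dist_comm] at hxy
      linarith [hc hs ht hst, dist_triangle4 (c s) y x (c t), mem_closedBall'.1 hy]
    calc ∑ s ∈ T, ψ s x • v s = ψ t x • v t :=
          Finset.sum_eq_single_of_mem t ht fun s hs hst ↦ by rw [ψ_ne s hs hst, zero_smul]
      _ = v t := by rw [ψ_self, one_smul]

lemma exists_pairwise_le_dist {ι E : Type*} [NormedAddCommGroup E] [NormedSpace ℝ E] [Nontrivial E]
    {T : Set ι} (hT : T.Countable) (L : ℝ) :
    ∃ e : ι → E, T.Pairwise fun s t ↦ L ≤ dist (e s) (e t) := by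
  obtain ⟨g, hg⟩ := countable_iff_exists_injOn.1 hT
  obtain ⟨v, hv⟩ := exists_norm_eq E zero_le_one
  refine ⟨fun t ↦ (g t * L) • v, fun s hs t ht hst ↦ ?_⟩
  have one_le : (1 : ℝ) ≤ |(g s : ℝ) - g t| := by
    exact_mod_cast Int.one_le_abs (sub_ne_zero.2 (Nat.cast_injective.ne (hg.ne hs ht hst)))
  calc L ≤ 1 * |L| := by rw [one_mul]; exact le_abs_self L
    _ ≤ |(g s : ℝ) - g t| * |L| := by gcongr
    _ = dist ((g s * L) • v) ((g t * L) • v) := by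
      rw [dist_eq_norm, ← sub_smul, norm_smul, hv, mul_one, ← sub_mul, Real.norm_eq_abs, abs_mul]

/-- For every `η > 0` some Lipschitz rearrangement translates each ball `closedBall (P i) (r - η)`
onto `closedBall (Q i) (r - η)`, and the displacement of these maps is bounded independently of
`η`. -/
def Transports {I X : Type*} [NormedAddCommGroup X] [MeasureSpace X] (r : ℝ) (P Q : I → X) :
    Prop :=
  ∃ R : ℝ, ∀ η > 0, ∃ S : X → X, IsLipschitzRearrangement S ∧ (∀ x, dist (S x) x ≤ R) ∧
    ∀ i x, dist x (P i) ≤ r - η → S x = x + (Q i - P i)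

namespace Transports

lemma trans {I X : Type*} [NormedAddCommGroup X] [MeasureSpace X] {r : ℝ} {P Q W : I → X}
    (hPQ : Transports r P Q) (hQW : Transports r Q W) : Transports r P W := by
  obtain ⟨R₁, h₁⟩ := hPQ
  obtain ⟨R₂, h₂⟩ := hQW
  refine ⟨R₂ + R₁, fun η hη ↦ ?_⟩
  obtain ⟨S₁, hS₁, hR₁, hPQ⟩ := h₁ η hη
  obtain ⟨S₂, hS₂, hR₂, hQW⟩ := h₂ η hη
  refine ⟨S₂ ∘ S₁, hS₂.comp hS₁,
    fun x ↦ (dist_triangle _ (S₁ x) _).trans (add_le_add (hR₂ _) (hR₁ _)), fun i x hx ↦ ?_⟩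
  have image_mem : dist (S₁ x) (Q i) ≤ r - η := by
    rw [hPQ i x hx, dist_eq_norm, add_sub_right_comm, add_comm_sub, sub_sub_cancel_left,
      ← sub_eq_add_neg, ← dist_eq_norm]
    exact hx
  rw [Function.comp_apply, hQW i _ image_mem, hPQ i x hx]
  abel

lemma conj {I X Y : Type*} [NormedAddCommGroup X] [NormedSpace ℝ X] [MeasureSpace X] [BorelSpace X]
    [NormedAddCommGroup Y] [NormedSpace ℝ Y] [MeasureSpace Y] [BorelSpace Y] {r : ℝ}
    (e : X ≃L[ℝ] Y) (he : MeasurePreserving e) {P Q : I → X} (h : Transports r (e ∘ P) (e ∘ Q)) :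
    ∃ R : ℝ, ∀ η > 0, ∃ S : X → X, IsLipschitzRearrangement S ∧ (∀ x, dist (S x) x ≤ R) ∧
      ∀ i x, dist (e x) (e (P i)) ≤ r - η → S x = x + (Q i - P i) := by
  obtain ⟨R, h⟩ := h
  refine ⟨‖(e.symm : Y →L[ℝ] X)‖ * R, fun η hη ↦ ?_⟩
  obtain ⟨S, hS, hR, hPQ⟩ := h η hη
  refine ⟨e.symm ∘ S ∘ e, hS.conj e he, fun x ↦ ?_, fun i x hx ↦ ?_⟩
  · calc dist (e.symm (S (e x))) x = dist (e.symm (S (e x))) (e.symm (e x)) := by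
          rw [e.symm_apply_apply]
      _ ≤ ‖(e.symm : Y →L[ℝ] X)‖ * dist (S (e x)) (e x) := e.symm.lipschitz.dist_le_mul _ _
      _ ≤ ‖(e.symm : Y →L[ℝ] X)‖ * R := by gcongr; exact hR _
  · simp only [Function.comp_apply, hPQ i (e x) hx, map_add, map_sub, e.symm_apply_apply]

section Prod

variable {I A B : Type*} {r : ℝ}
  [NormedAddCommGroup A] [MeasureSpace A] [BorelSpace A] [SFinite (volume : Measure A)]
  [NormedAddCommGroup B] [NormedSpace ℝ B] [SecondCountableTopology B] [MeasureSpace B]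
  [BorelSpace B] [SFinite (volume : Measure B)]

lemma swap [NormedSpace ℝ A] {P Q : I → B × A} (h : Transports r P Q) :
    Transports r (fun i ↦ (P i).swap) fun i ↦ (Q i).swap := by
  obtain ⟨R, h⟩ := conj (P := fun i ↦ (P i).swap) (Q := fun i ↦ (Q i).swap)
    (ContinuousLinearEquiv.prodComm ℝ A B) Measure.measurePreserving_swap h
  refine ⟨R, fun η hη ↦ ?_⟩
  obtain ⟨S, hS, hR, hPQ⟩ := h η hη
  exact ⟨S, hS, hR, fun i x hx ↦ hPQ i x ((max_comm _ _).trans_le hx)⟩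

variable [Finite I]

lemma shear_snd [(volume : Measure B).IsAddRightInvariant] {P : I → A × B} {v : I → B}
    (h : ∀ i j, (P i).1 = (P j).1 ∧ v i = v j ∨ 2 * r ≤ dist (P i).1 (P j).1) :
    Transports r P fun i ↦ ((P i).1, (P i).2 + v i) := by
  obtain ⟨R, hR⟩ := exists_lipschitzWith_eq_on_balls (r := r) (c := Prod.fst) (v := Prod.snd)
    (T := (finite_range fun i ↦ ((P i).1, v i)).toFinset) <| by
      simp only [Finite.coe_toFinset]
      rintro _ ⟨i, rfl⟩ _ ⟨j, rfl⟩ hij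
      exact (h i j).resolve_left fun ⟨hP, hv⟩ ↦ hij (by simp only [hP, hv])
  refine ⟨R, fun η hη ↦ ?_⟩
  obtain ⟨f, ⟨K, hK⟩, hfR, hf⟩ := hR η hη
  refine ⟨_, IsLipschitzRearrangement.shear hK, fun x ↦ ?_, fun i x hx ↦ ?_⟩
  · rw [Prod.dist_eq, dist_self, dist_self_add_left]
    exact max_le ((norm_nonneg _).trans (hfR x.1)) (hfR x.1)
  · have hfx : f x.1 = v i := hf ((P i).1, v i)
      ((Finite.mem_toFinset _).2 (mem_range_self i)) x.1 ((le_max_left _ _).trans hx)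
    ext <;> simp [hfx]

lemma replace_snd [(volume : Measure B).IsAddRightInvariant] {a : I → A}
    (ha : Pairwise fun i j ↦ 2 * r ≤ dist (a i) (a j)) (b b' : I → B) :
    Transports r (fun i ↦ (a i, b i)) fun i ↦ (a i, b' i) := by
  have h := shear_snd (r := r) (P := fun i ↦ (a i, b i)) (v := fun i ↦ b' i - b i) fun i j ↦ by
    rcases eq_or_ne i j with rfl | hij
    exacts [.inl ⟨rfl, rfl⟩, .inr (ha hij)]
  simpa only [add_sub_cancel] using h

variable [NormedSpace ℝ A] [SecondCountableTopology A] [(volume : Measure A).IsAddRightInvariant]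

lemma shear_fst {P : I → A × B} {v : I → A}
    (h : ∀ i j, (P i).2 = (P j).2 ∧ v i = v j ∨ 2 * r ≤ dist (P i).2 (P j).2) :
    Transports r P fun i ↦ ((P i).1 + v i, (P i).2) :=
  (shear_snd (P := fun i ↦ (P i).swap) h).swap

lemma replace_fst {b : I → B} (hb : Pairwise fun i j ↦ 2 * r ≤ dist (b i) (b j)) (a a' : I → A) :
    Transports r (fun i ↦ (a i, b i)) fun i ↦ (a' i, b i) :=
  (replace_snd hb a a').swap

end Prod
end Transports

/-- Any two of the points either have second coordinates at distance at least `2 * r`, or share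
the second coordinate and have first coordinates at distance at least `2 * r`, as distinct points
of the lattice `2rℤⁿ` do with respect to the sup distance. -/
def GridSeparated {I A B : Type*} [Dist A] [Dist B] (r : ℝ) (P : I → A × B) : Prop :=
  Pairwise fun i j ↦ 2 * r ≤ dist (P i).2 (P j).2 ∨
    (P i).2 = (P j).2 ∧ 2 * r ≤ dist (P i).1 (P j).1

namespace GridSeparated

variable {I A B : Type*} [Finite I] {r : ℝ}
  [NormedAddCommGroup A] [NormedSpace ℝ A] [Nontrivial A] [SecondCountableTopology A]
  [MeasureSpace A] [BorelSpace A] [SFinite (volume : Measure A)]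
  [(volume : Measure A).IsAddRightInvariant]
  [NormedAddCommGroup B] [NormedSpace ℝ B] [SecondCountableTopology B]
  [MeasureSpace B] [BorelSpace B] [SFinite (volume : Measure B)]

lemma exists_transports_separated {P : I → A × B} (hP : GridSeparated r P) :
    ∃ a : I → A, Pairwise (fun i j ↦ 2 * r ≤ dist (a i) (a j)) ∧
      Transports r P (fun i ↦ (a i, (P i).2)) ∧ Transports r (fun i ↦ (a i, (P i).2)) P := by
  obtain ⟨D, hD⟩ := (finite_range fun i ↦ (P i).1).isBounded.exists_norm_le
  obtain ⟨φ, hφ⟩ := exists_pairwise_le_dist (E := A)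
    (finite_range fun i ↦ (P i).2).countable (2 * r + 2 * D)
  have shear_condition : ∀ f : B → A, ∀ i j, (P i).2 = (P j).2 ∧ f (P i).2 = f (P j).2 ∨
      2 * r ≤ dist (P i).2 (P j).2 := fun f i j ↦ by
    rcases eq_or_ne i j with rfl | hij
    · exact .inl ⟨rfl, rfl⟩
    · exact (hP hij).symm.imp_left fun h ↦ ⟨h.1, congrArg f h.1⟩
  refine ⟨fun i ↦ (P i).1 + φ (P i).2, fun i j hij ↦ ?_,
    Transports.shear_fst (shear_condition φ), ?_⟩
  · simp only
    by_cases hb : (P i).2 = (P j).2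
    · rw [hb, dist_add_right]
      rcases hP hij with h | h
      · rw [hb, dist_self] at h
        exact h.trans dist_nonneg
      · exact h.2
    · have hφij := hφ (mem_range_self i) (mem_range_self j) hb
      have hDi := hD _ (mem_range_self i)
      have hDj := hD _ (mem_range_self j)
      have := dist_add_add_le ((P i).1 + φ (P i).2) (-(P i).1) ((P j).1 + φ (P j).2) (-(P j).1)
      simp only [add_neg_cancel_comm, dist_neg_neg] at this
      linarith [dist_le_norm_add_norm (P i).1 (P j).1]
  · have h := Transports.shear_fst (P := fun i ↦ ((P i).1 + φ (P i).2, (P i).2))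
      (shear_condition fun b ↦ -φ b)
    simpa only [add_neg_cancel_right] using h

lemma transports [Nontrivial B] [(volume : Measure B).IsAddRightInvariant] {P Q : I → A × B}
    (hP : GridSeparated r P) (hQ : GridSeparated r Q) :
    Transports r P Q := by
  obtain ⟨a, ha, hPa, -⟩ := hP.exists_transports_separated
  obtain ⟨c, hc, -, hcQ⟩ := hQ.exists_transports_separated
  obtain ⟨e, he⟩ := exists_pairwise_le_dist (E := B) (countable_univ (α := I)) (2 * r)
  rw [pairwise_univ] at he
  exact (((hPa.trans (.replace_snd ha _ e)).trans (.replace_fst he a c)).trans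
    (.replace_snd hc e _)).trans hcQ

end GridSeparated

/-! ### The area formula for Lipschitz maps -/

lemma measurableSet_inter_preimage {X Y : Type*} [TopologicalSpace X] [MeasurableSpace X]
    [BorelSpace X] [TopologicalSpace Y] [MeasurableSpace Y] [BorelSpace Y] {f : X → Y} {s : Set X}
    {A : Set Y} (hf : ContinuousOn f s) (hs : MeasurableSet s) (hA : MeasurableSet A) :
    MeasurableSet (s ∩ f ⁻¹' A) := by
  rw [← Subtype.image_preimage_val]
  exact hs.subtype_image ((continuousOn_iff_continuous_domRestrict.1 hf).measurable hA)

section AreaFormula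

variable {E : Type*} [NormedAddCommGroup E] [NormedSpace ℝ E] [FiniteDimensional ℝ E]
  [MeasurableSpace E] [BorelSpace E] {μ : Measure E} [μ.IsAddHaarMeasure]
  {f : E → E} {s U N : Set E} {K : NNReal}

lemma addHaar_image_eq_zero_of_lipschitzOnWith (hf : LipschitzOnWith K f s) (hs : μ s = 0) :
    μ (f '' s) = 0 := by
  let ν : Measure E := μH[Module.finrank ℝ E]
  have hμν : μ ≪ ν := Measure.absolutelyContinuous_isAddHaarMeasure _ _
  have hνμ : ν ≪ μ := Measure.absolutelyContinuous_isAddHaarMeasure _ _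
  refine hμν (le_antisymm ?_ zero_le)
  simpa [ν, hνμ hs] using hf.hausdorffMeasure_image_le (d := Module.finrank ℝ E) (by positivity)

lemma addHaar_eq_zero_of_addHaar_image_eq_zero {f' : E → E →L[ℝ] E}
    (hf : ∀ x ∈ s, HasFDerivWithinAt f (f' x) s x) (hdet : ∀ x ∈ s, (f' x).det ≠ 0)
    (h_image : μ (f '' s) = 0) : μ s = 0 := by
  have expansive (A : E →L[ℝ] E) : ∃ r : NNReal, r ≠ 0 ∧ (A.det ≠ 0 → ∀ t,
      ApproximatesLinearOn f A t r → μ (f '' t) = 0 → μ t = 0) := by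
    by_cases hA : A.det = 0
    · exact ⟨1, one_ne_zero, absurd hA⟩
    obtain ⟨m, hm, hmA⟩ := ENNReal.lt_iff_exists_nnreal_btwn.1
      (ENNReal.ofReal_pos.2 (abs_pos.2 hA))
    obtain ⟨r, hr, hr0⟩ :=
      ((mul_le_addHaar_image_of_lt_det μ A hmA).and self_mem_nhdsWithin).exists
    refine ⟨r, ne_of_gt (mem_Ioi.1 hr0), fun _ t ht h0 ↦ ?_⟩
    exact (mul_eq_zero.1 (le_antisymm ((hr t f ht).trans h0.le) zero_le)).resolve_left hm.ne'
  choose r hr0 hr using expansive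
  obtain ⟨t, A, -, -, h_cover, h_approx, hA⟩ :=
    exists_partition_approximatesLinearOn_of_hasFDerivWithinAt f s f' hf r hr0
  rw [← inter_eq_left.2 h_cover, inter_iUnion, measure_iUnion_null_iff]
  intro k
  rcases s.eq_empty_or_nonempty with rfl | hs
  · simp
  obtain ⟨y, hy, hAy⟩ := hA hs k
  exact hr (A k) (hAy ▸ hdet y hy) _ (h_approx k)
    (measure_mono_null (image_mono inter_subset_left) h_image)

lemma ae_restrict_differentiableAt (hU : IsOpen U) (hf : LipschitzOnWith K f U) :
    ∀ᵐ x ∂μ.restrict U, DifferentiableAt ℝ f x := by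
  filter_upwards [hf.ae_differentiableWithinAt (μ := μ) hU.measurableSet,
    ae_restrict_mem hU.measurableSet] with x hx hxU
  exact hx.differentiableAt (hU.mem_nhds hxU)

lemma addHaar_inter_preimage_eq_zero (hU : IsOpen U) (hf : LipschitzOnWith K f U)
    (hdet : ∀ᵐ x ∂μ.restrict U, (fderiv ℝ f x).det ≠ 0) (hN : μ N = 0) :
    μ (U ∩ f ⁻¹' N) = 0 := by
  let G := {x ∈ U ∩ f ⁻¹' N | DifferentiableAt ℝ f x ∧ (fderiv ℝ f x).det ≠ 0}
  have hG : μ G = 0 := addHaar_eq_zero_of_addHaar_image_eq_zero (f := f) (f' := fderiv ℝ f)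
    (fun x hx ↦ hx.2.1.hasFDerivAt.hasFDerivWithinAt) (fun x hx ↦ hx.2.2)
    (measure_mono_null (by rintro _ ⟨x, hx, rfl⟩; exact hx.1.2) hN)
  refine measure_mono_null_ae ?_ hG
  filter_upwards [(ae_restrict_iff' hU.measurableSet).1 (ae_restrict_differentiableAt hU hf),
    (ae_restrict_iff' hU.measurableSet).1 hdet] with x hx hx' hxU
  exact ⟨hxU, hx hxU.1, hx' hxU.1⟩

lemma addHaar_image_le_lintegral_abs_det_fderiv_of_lipschitzOnWith (hU : IsOpen U)
    (hf : LipschitzOnWith K f U) (hs : MeasurableSet s) (hsU : s ⊆ U) :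
    μ (f '' s) ≤ ∫⁻ x in s, ENNReal.ofReal |(fderiv ℝ f x).det| ∂μ := by
  let D := {x | DifferentiableAt ℝ f x}
  have hD : MeasurableSet D := measurableSet_of_differentiableAt ℝ f
  have null_sdiff : μ (s \ D) = 0 := by
    rw [← Measure.restrict_eq_self μ (sdiff_subset.trans hsU)]
    exact measure_mono_null (fun x hx ↦ hx.2) (ae_restrict_differentiableAt hU hf)
  calc μ (f '' s) ≤ μ (f '' (s ∩ D)) + μ (f '' (s \ D)) := by
        rw [← inter_union_sdiff s D, image_union]
        simpa using measure_union_le _ _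
    _ = μ (f '' (s ∩ D)) := by
        rw [addHaar_image_eq_zero_of_lipschitzOnWith (hf.mono (sdiff_subset.trans hsU)) null_sdiff,
          add_zero]
    _ ≤ ∫⁻ x in s ∩ D, ENNReal.ofReal |(fderiv ℝ f x).det| ∂μ :=
        addHaar_image_le_lintegral_abs_det_fderiv μ (hs.inter hD)
          fun x hx ↦ (DifferentiableAt.hasFDerivAt hx.2).hasFDerivWithinAt
    _ ≤ ∫⁻ x in s, ENNReal.ofReal |(fderiv ℝ f x).det| ∂μ := lintegral_mono_set inter_subset_left

lemma measurable_det_fderiv (f : E → E) : Measurable fun x ↦ (fderiv ℝ f x).det :=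
  ContinuousLinearMap.continuous_det.measurable.comp (measurable_fderiv ℝ f)

theorem lintegral_abs_det_fderiv_eq_addHaar_image_of_ae_subsingleton (hU : IsOpen U)
    (hf : LipschitzOnWith K f U) (hf_inj : ∀ᵐ y ∂μ, (U ∩ f ⁻¹' {y}).Subsingleton)
    (hs : MeasurableSet s) (hsU : s ⊆ U) :
    ∫⁻ x in s, ENNReal.ofReal |(fderiv ℝ f x).det| ∂μ = μ (f '' s) := by
  refine le_antisymm ?_
    (addHaar_image_le_lintegral_abs_det_fderiv_of_lipschitzOnWith hU hf hs hsU)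
  let G := {x | (fderiv ℝ f x).det ≠ 0} ∩ {x | DifferentiableAt ℝ f x}
  let P := f ⁻¹' {y | ¬(U ∩ f ⁻¹' {y}).Subsingleton}
  have hG : MeasurableSet G := ((measurable_det_fderiv f) (measurableSet_singleton 0).compl).inter
    (measurableSet_of_differentiableAt ℝ f)
  have hasFDerivWithinAt {t : Set E} (x) (hx : x ∈ s ∩ G ∩ t) :
      HasFDerivWithinAt f (fderiv ℝ f x) (s ∩ G ∩ t) x := hx.1.2.2.hasFDerivAt.hasFDerivWithinAt
  have null_noninjective : μ (s ∩ G ∩ P) = 0 :=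
    addHaar_eq_zero_of_addHaar_image_eq_zero hasFDerivWithinAt (fun x hx ↦ hx.1.2.1)
      (measure_mono_null (by rintro _ ⟨x, hx, rfl⟩; exact hx.2) hf_inj)
  have zero_on_sdiff : ∫⁻ x in s \ G, ENNReal.ofReal |(fderiv ℝ f x).det| ∂μ = 0 := by
    rw [setLIntegral_congr_fun_ae (hs.diff hG) (g := 0), Pi.zero_def, lintegral_zero]
    filter_upwards [(ae_restrict_iff' hU.measurableSet).1 (ae_restrict_differentiableAt hU hf)]
      with x hx hxG
    have hdet : (fderiv ℝ f x).det = 0 := of_not_not fun h ↦ hxG.2 ⟨h, hx (hsU hxG.1)⟩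
    simp [hdet]
  calc ∫⁻ x in s, ENNReal.ofReal |(fderiv ℝ f x).det| ∂μ
      = ∫⁻ x in s ∩ G ∩ Pᶜ ∪ (s ∩ G ∩ P ∪ s \ G), ENNReal.ofReal |(fderiv ℝ f x).det| ∂μ := by
        rw [← union_assoc, union_comm (s ∩ G ∩ Pᶜ), inter_union_compl, inter_union_sdiff]
    _ ≤ ∫⁻ x in s ∩ G ∩ Pᶜ, ENNReal.ofReal |(fderiv ℝ f x).det| ∂μ := by
        refine (lintegral_union_le _ _ _).trans (add_le_of_nonpos_right
          ((lintegral_union_le _ _ _).trans ?_))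
        rw [setLIntegral_measure_zero _ _ null_noninjective, zero_on_sdiff, add_zero]
    _ = μ (f '' (s ∩ G ∩ Pᶜ)) := by
        refine lintegral_abs_det_fderiv_eq_addHaar_image₀ μ ?_ hasFDerivWithinAt ?_
        · rw [← Set.sdiff_eq, ← sdiff_self_inter]
          exact (hs.inter hG).nullMeasurableSet.diff (.of_null null_noninjective)
        · intro x hx y hy hxy
          exact not_not.1 hx.2 ⟨hsU hx.1.1, rfl⟩ ⟨hsU hy.1.1, hxy.symm⟩
    _ ≤ μ (f '' s) := measure_mono (image_mono (inter_subset_left.trans inter_subset_left))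

lemma setIntegral_abs_det_fderiv_eq_measureReal_image (hU : IsOpen U) (hf : LipschitzOnWith K f U)
    (hf_inj : ∀ᵐ y ∂μ, (U ∩ f ⁻¹' {y}).Subsingleton) (hs : MeasurableSet s) (hsU : s ⊆ U) :
    ∫ x in s, |(fderiv ℝ f x).det| ∂μ = μ.real (f '' s) := by
  rw [integral_eq_lintegral_of_nonneg_ae (.of_forall fun _ ↦ abs_nonneg _)
    (measurable_det_fderiv f).abs.aestronglyMeasurable,
    lintegral_abs_det_fderiv_eq_addHaar_image_of_ae_subsingleton hU hf hf_inj hs hsU, Measure.real]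

lemma integrableOn_det_fderiv (hU : IsOpen U) (hf : LipschitzOnWith K f U)
    (hf_inj : ∀ᵐ y ∂μ, (U ∩ f ⁻¹' {y}).Subsingleton) (hfU : μ (f '' U) ≠ ⊤) :
    IntegrableOn (fun x ↦ (fderiv ℝ f x).det) U μ := by
  refine ⟨(measurable_det_fderiv f).aestronglyMeasurable, ?_⟩
  simp only [hasFiniteIntegral_iff_norm, Real.norm_eq_abs]
  rw [lintegral_abs_det_fderiv_eq_addHaar_image_of_ae_subsingleton hU hf hf_inj hU.measurableSet
    le_rfl]
  exact hfU.lt_top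

lemma mul_measureReal_le_of_image_subset (hU : IsOpen U) (hf : LipschitzOnWith K f U)
    (hf_inj : ∀ᵐ y ∂μ, (U ∩ f ⁻¹' {y}).Subsingleton) {lam : ℝ} (hlam : 0 ≤ lam)
    (hdet : ∀ᵐ x ∂μ.restrict U, lam ≤ |(fderiv ℝ f x).det|) (hs : MeasurableSet s) (hsU : s ⊆ U)
    {A : Set E} (hsA : f '' s ⊆ A) (hA : μ A ≠ ⊤) :
    lam * μ.real s ≤ μ.real A := by
  have h : ENNReal.ofReal lam * μ s ≤ μ A :=
    calc ENNReal.ofReal lam * μ s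
        = ∫⁻ _ in s, ENNReal.ofReal lam ∂μ := (setLIntegral_const _ _).symm
      _ ≤ ∫⁻ x in s, ENNReal.ofReal |(fderiv ℝ f x).det| ∂μ := lintegral_mono_ae
        ((ae_restrict_of_ae_restrict_of_subset hsU hdet).mono fun _ ↦ ENNReal.ofReal_le_ofReal)
      _ = μ (f '' s) :=
        lintegral_abs_det_fderiv_eq_addHaar_image_of_ae_subsingleton hU hf hf_inj hs hsU
      _ ≤ μ A := measure_mono hsA
  simpa [Measure.real, ENNReal.toReal_ofReal hlam] using ENNReal.toReal_mono hA h

lemma measureReal_sub_measureReal_le_setIntegral (hU : IsOpen U) (hf : LipschitzOnWith K f U)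
    (hf_inj : ∀ᵐ y ∂μ, (U ∩ f ⁻¹' {y}).Subsingleton) (hfU : μ (f '' U) ≠ ⊤)
    (hs : MeasurableSet s) (hsU : s ⊆ U) (hs_fin : μ s ≠ ⊤) {A : Set E} (hsA : f '' s ⊆ A)
    (hA : μ A ≠ ⊤) :
    μ.real s - μ.real A ≤ ∫ x in s, max (1 - |(fderiv ℝ f x).det|) 0 ∂μ := by
  have integrableOn_one : IntegrableOn (fun _ ↦ (1 : ℝ)) s μ := integrableOn_const hs_fin
  have integrableOn_det := ((integrableOn_det_fderiv hU hf hf_inj hfU).mono_set hsU).abs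
  calc μ.real s - μ.real A ≤ μ.real s - μ.real (f '' s) := by
        gcongr
    _ = ∫ x in s, (1 - |(fderiv ℝ f x).det|) ∂μ := by
        rw [integral_sub integrableOn_one integrableOn_det, setIntegral_const, smul_eq_mul, mul_one,
          setIntegral_abs_det_fderiv_eq_measureReal_image hU hf hf_inj hs hsU]
    _ ≤ ∫ x in s, max (1 - |(fderiv ℝ f x).det|) 0 ∂μ := by
        have h := integrableOn_one.sub integrableOn_det
        exact integral_mono h h.pos_part fun x ↦ le_max_left _ _

lemma map_restrict_eq_restrict_image (hU : IsOpen U) (hf : LipschitzOnWith K f U)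
    (hf_inj : ∀ᵐ y ∂μ, (U ∩ f ⁻¹' {y}).Subsingleton)
    (hdet : ∀ᵐ x ∂μ.restrict U, |(fderiv ℝ f x).det| = 1) :
    Measure.map f (μ.restrict U) = μ.restrict (f '' U) := by
  ext A hA
  have hUA := measurableSet_inter_preimage hf.continuousOn hU.measurableSet hA
  rw [Measure.map_apply_of_aemeasurable (hf.continuousOn.aemeasurable hU.measurableSet) hA,
    Measure.restrict_apply' hU.measurableSet, Measure.restrict_apply hA, inter_comm _ U,
    inter_comm A, ← image_inter_preimage,
    ← lintegral_abs_det_fderiv_eq_addHaar_image_of_ae_subsingleton hU hf hf_inj hUA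
      inter_subset_left, ← setLIntegral_one]
  refine lintegral_congr_ae
    ((ae_restrict_of_ae_restrict_of_subset inter_subset_left hdet).mono fun x hx ↦ ?_)
  simp [hx]

end AreaFormula

/-! ### Admissible maps -/

section Admissible

variable {n : ℕ} {U : Set (EuclideanSpace ℝ (Fin n))}
  {u S : EuclideanSpace ℝ (Fin n) → EuclideanSpace ℝ (Fin n)} {K : NNReal}

/-- The class of competitors for the approximation of `u`: bounded Lipschitz maps on `U` which are
essentially injective and measure preserving. -/
structure IsAdmissible (U : Set (EuclideanSpace ℝ (Fin n)))
    (S : EuclideanSpace ℝ (Fin n) → EuclideanSpace ℝ (Fin n)) : Prop where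
  lipschitzOnWith : ∃ K : NNReal, LipschitzOnWith K S U
  isBounded_image : IsBounded (S '' U)
  multOn_eq_one : multOn U S = 1
  map_eq_restrict : ∃ B : Set (EuclideanSpace ℝ (Fin n)), MeasurableSet B ∧
    Measure.map S (volume.restrict U) = volume.restrict B

lemma ae_encard_le_multOn (U : Set (EuclideanSpace ℝ (Fin n)))
    (u : EuclideanSpace ℝ (Fin n) → EuclideanSpace ℝ (Fin n)) :
    ∀ᵐ y, (U ∩ u ⁻¹' {y}).encard ≤ multOn U u :=
  ae_le_essSup (f := fun y ↦ (U ∩ u ⁻¹' {y}).encard)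

lemma ae_subsingleton_of_multOn_eq_one (h : multOn U u = 1) :
    ∀ᵐ y, (U ∩ u ⁻¹' {y}).Subsingleton := by
  filter_upwards [ae_encard_le_multOn U u] with y hy
  exact encard_le_one_iff_subsingleton.1 (h ▸ hy)

lemma multOn_eq_one_of_injOn (hu : InjOn u U) (huU : volume (u '' U) ≠ 0) : multOn U u = 1 := by
  refine le_antisymm (essSup_le_of_ae_le _ (.of_forall fun y ↦ ?_)) ?_
  · exact encard_le_one_iff_subsingleton.2 fun x hx y hy ↦ hu hx.1 hy.1 (hx.2.trans hy.2.symm)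
  · refine Order.one_le_iff_ne_zero.2 fun h0 ↦ huU (measure_mono_null ?_ (ae_encard_le_multOn U u))
    rintro _ ⟨x, hx, rfl⟩ hle
    exact (encard_pos.2 (⟨x, hx, rfl⟩ : (U ∩ u ⁻¹' {u x}).Nonempty)).not_ge (h0 ▸ hle)

lemma IsLipschitzRearrangement.isAdmissible (hS : IsLipschitzRearrangement S) (hne : U.Nonempty)
    (hUo : IsOpen U) (hUb : IsBounded U) : IsAdmissible U S := by
  obtain ⟨K, hK⟩ := hS.lipschitz
  have hemb : MeasurableEmbedding S := hK.continuous.measurableEmbedding hS.injective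
  refine ⟨⟨K, hK.lipschitzOnWith⟩, hK.isBounded_image hUb, ?_, S '' U,
    hemb.measurableSet_image.2 hUo.measurableSet,
    (hS.measurePreserving.restrict_image_emb hemb U).map_eq⟩
  refine multOn_eq_one_of_injOn hS.injective.injOn ?_
  rw [← hS.measurePreserving.measure_preimage_emb hemb, preimage_image_eq _ hS.injective]
  exact (hUo.measure_pos volume hne).ne'

lemma isAdmissible_of_abs_det_fderiv_eq_one (hUo : IsOpen U) (hu : LipschitzOnWith K u U)
    (hub : IsBounded (u '' U)) (hu_inj : multOn U u = 1)
    (hdet : ∀ᵐ x ∂volume.restrict U, |(fderiv ℝ u x).det| = 1) : IsAdmissible U u := by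
  refine ⟨⟨K, hu⟩, hub, hu_inj, toMeasurable volume (u '' U), measurableSet_toMeasurable _ _, ?_⟩
  rw [Measure.restrict_toMeasurable hub.measure_lt_top.ne]
  exact map_restrict_eq_restrict_image hUo hu (ae_subsingleton_of_multOn_eq_one hu_inj) hdet

end Admissible

/-! ### Dimension one -/

section DimensionOne

/-- The isometric identification of the line with one-dimensional Euclidean space. -/
def realIsometryEquiv : ℝ ≃ₗᵢ[ℝ] EuclideanSpace ℝ (Fin 1) :=
  (OrthonormalBasis.singleton (Fin 1) ℝ).repr

lemma volume_eq_volume_preimage_realIsometryEquiv (A : Set (EuclideanSpace ℝ (Fin 1))) :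
    volume A = volume (realIsometryEquiv ⁻¹' A) :=
  (realIsometryEquiv.measurePreserving.measure_preimage_emb
    realIsometryEquiv.toHomeomorph.measurableEmbedding A).symm

lemma edist_le_volume_of_isPreconnected {A : Set (EuclideanSpace ℝ (Fin 1))}
    (hA : IsPreconnected A) {x y : EuclideanSpace ℝ (Fin 1)} (hx : x ∈ A) (hy : y ∈ A) :
    edist x y ≤ volume A := by
  obtain ⟨a, rfl⟩ := realIsometryEquiv.surjective x
  obtain ⟨b, rfl⟩ := realIsometryEquiv.surjective y
  have h_interval : uIcc a b ⊆ realIsometryEquiv ⁻¹' A :=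
    (realIsometryEquiv.toHomeomorph.isPreconnected_preimage.2 hA).ordConnected.uIcc_subset hx hy
  rw [volume_eq_volume_preimage_realIsometryEquiv, realIsometryEquiv.edist_map, edist_comm,
    edist_dist, Real.dist_eq, ← Real.volume_interval]
  exact measure_mono h_interval

lemma measureReal_closedBall_fin_one (x : EuclideanSpace ℝ (Fin 1)) {r : ℝ} (hr : 0 ≤ r) :
    volume.real (closedBall x r) = 2 * r := by
  rw [Measure.real, volume_eq_volume_preimage_realIsometryEquiv,
    realIsometryEquiv.preimage_closedBall, Real.volume_closedBall,
    ENNReal.toReal_ofReal (by positivity)]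

lemma det_sub_id_fin_one (A : EuclideanSpace ℝ (Fin 1) →L[ℝ] EuclideanSpace ℝ (Fin 1)) :
    (A - .id ℝ _).det = A.det - 1 := by
  let b := (EuclideanSpace.basisFun (Fin 1) ℝ).toBasis
  simp only [ContinuousLinearMap.det, ← LinearMap.det_toMatrix b, Matrix.det_fin_one,
    ContinuousLinearMap.toLinearMap_sub, map_sub, ContinuousLinearMap.coe_id, LinearMap.toMatrix_id]
  simp

variable {U : Set (EuclideanSpace ℝ (Fin 1))}
  {u : EuclideanSpace ℝ (Fin 1) → EuclideanSpace ℝ (Fin 1)} {K : NNReal}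

lemma norm_sub_sub_le_integral_one_sub_det (hUo : IsOpen U) (hUc : IsPreconnected U)
    (hu : LipschitzOnWith K u U)
    (hdet : IntegrableOn (fun x ↦ 1 - (fderiv ℝ u x).det) U)
    {x y : EuclideanSpace ℝ (Fin 1)} (hx : x ∈ U) (hy : y ∈ U) :
    ‖u x - (x + (u y - y))‖ ≤ ∫ x in U, |1 - (fderiv ℝ u x).det| := by
  let g : EuclideanSpace ℝ (Fin 1) → EuclideanSpace ℝ (Fin 1) := fun x ↦ u x - x
  have hg : LipschitzOnWith (K + 1) g U := hu.sub LipschitzWith.id.lipschitzOnWith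
  have det_fderiv_g : ∀ᵐ x ∂volume.restrict U,
      |(fderiv ℝ g x).det| = |1 - (fderiv ℝ u x).det| := by
    filter_upwards [ae_restrict_differentiableAt hUo hu] with x hx
    have hgx : fderiv ℝ g x = fderiv ℝ u x - .id ℝ _ :=
      (hx.hasFDerivAt.sub (hasFDerivAt_id x)).fderiv
    rw [hgx, det_sub_id_fin_one, abs_sub_comm]
  rw [← ENNReal.ofReal_le_ofReal_iff (integral_nonneg fun _ ↦ abs_nonneg _),
    ofReal_integral_eq_lintegral_ofReal hdet.abs (.of_forall fun _ ↦ abs_nonneg _)]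
  calc ENNReal.ofReal ‖u x - (x + (u y - y))‖ = edist (g x) (g y) := by
        rw [edist_dist, dist_eq_norm]
        congr 2
        simp only [g]
        abel
    _ ≤ volume (g '' U) := edist_le_volume_of_isPreconnected (hUc.image g hg.continuousOn)
        (mem_image_of_mem g hx) (mem_image_of_mem g hy)
    _ ≤ ∫⁻ x in U, ENNReal.ofReal |(fderiv ℝ g x).det| :=
        addHaar_image_le_lintegral_abs_det_fderiv_of_lipschitzOnWith hUo hg hUo.measurableSet le_rfl
    _ = ∫⁻ x in U, ENNReal.ofReal |1 - (fderiv ℝ u x).det| :=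
        lintegral_congr_ae (det_fderiv_g.mono fun x hx ↦ congrArg ENNReal.ofReal hx)

theorem exists_isAdmissible_integral_le_fin_one (hne : U.Nonempty) (hUo : IsOpen U)
    (hUb : IsBounded U) (hUc : IsPreconnected U) (hu : LipschitzOnWith K u U)
    (hub : IsBounded (u '' U)) (hu_inj : multOn U u = 1) {d lam : ℝ} (hd : diam (u '' U) ≤ d)
    (hlam : 0 < lam) (hdet : ∀ᵐ x ∂volume.restrict U, lam ≤ |(fderiv ℝ u x).det|) :
    ∃ S, IsAdmissible U S ∧
      ∫ x in U, ‖u x - S x‖ ≤ 2 * (d / lam) * ∫ x in U, |1 - (fderiv ℝ u x).det| := by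
  obtain ⟨y, hy⟩ := hne
  have hinj := ae_subsingleton_of_multOn_eq_one hu_inj
  have integrableOn_one_sub_det : IntegrableOn (fun x ↦ 1 - (fderiv ℝ u x).det) U :=
    (integrableOn_const hUb.measure_lt_top.ne).sub
      (integrableOn_det_fderiv hUo hu hinj hub.measure_lt_top.ne)
  have image_subset : u '' U ⊆ closedBall (u y) d := fun z hz ↦
    (dist_le_diam_of_mem hub hz (mem_image_of_mem u hy)).trans hd
  have measure_le : lam * volume.real U ≤ 2 * d := by
    rw [← measureReal_closedBall_fin_one (u y) (diam_nonneg.trans hd)]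
    exact mul_measureReal_le_of_image_subset hUo hu hinj hlam.le hdet hUo.measurableSet le_rfl
      image_subset measure_closedBall_lt_top.ne
  have rearrangement : IsLipschitzRearrangement fun x ↦ x + (u y - y) :=
    ⟨⟨1, (isometry_add_right _).lipschitz⟩, add_left_injective _, measurePreserving_add_right _ _⟩
  refine ⟨_, rearrangement.isAdmissible ⟨y, hy⟩ hUo hUb, ?_⟩
  calc ∫ x in U, ‖u x - (x + (u y - y))‖
      ≤ (∫ x in U, |1 - (fderiv ℝ u x).det|) * volume.real U :=
        (Real.le_norm_self _).trans (norm_setIntegral_le_of_norm_le_const hUb.measure_lt_top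
          fun x hx ↦ (norm_norm _).trans_le
            (norm_sub_sub_le_integral_one_sub_det hUo hUc hu integrableOn_one_sub_det hx hy))
    _ ≤ (∫ x in U, |1 - (fderiv ℝ u x).det|) * (2 * (d / lam)) := by
        gcongr
        rwa [← mul_div_assoc, le_div_iff₀' hlam]
    _ = _ := mul_comm _ _

end DimensionOne
/-! ### Grids of cubes -/

section Grid

variable {n : ℕ} {h : ℝ}

/-- The index of the half-open cube of the grid `hℤⁿ` containing `x`. -/
def cellIndex (h : ℝ) (x : EuclideanSpace ℝ (Fin n)) : Fin n → ℤ := fun j ↦ ⌊x j / h⌋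

/-- The half-open cube `∏ⱼ [zⱼ h, (zⱼ + 1) h)`, encoded as a fibre of `cellIndex`. -/
def cell (h : ℝ) (z : Fin n → ℤ) : Set (EuclideanSpace ℝ (Fin n)) := cellIndex h ⁻¹' {z}

lemma cell_eq_preimage_pi (hh : 0 < h) (z : Fin n → ℤ) :
    cell h z = WithLp.ofLp ⁻¹' univ.pi fun j ↦ Ico (z j * h) ((z j + 1) * h) := by
  ext x
  simp only [cell, cellIndex, mem_preimage, mem_singleton_iff, funext_iff, Int.floor_eq_iff,
    le_div_iff₀ hh, div_lt_iff₀ hh, mem_univ_pi, mem_Ico]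

lemma mem_cell_iff (hh : 0 < h) {z : Fin n → ℤ} {x : EuclideanSpace ℝ (Fin n)} :
    x ∈ cell h z ↔ ∀ j, z j * h ≤ x j ∧ x j < (z j + 1) * h := by
  simp only [cell_eq_preimage_pi hh, mem_preimage, mem_univ_pi, mem_Ico]

lemma mem_cell_cellIndex (x : EuclideanSpace ℝ (Fin n)) : x ∈ cell h (cellIndex h x) := rfl

lemma surjective_cellIndex (hh : h ≠ 0) : Function.Surjective (cellIndex (n := n) h) := fun z ↦
  ⟨WithLp.toLp 2 fun j ↦ z j * h, funext fun j ↦ by simp [cellIndex, hh]⟩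

lemma pairwise_disjoint_cell : Pairwise (Function.onFun Disjoint (cell (n := n) h)) :=
  fun _ _ ↦ Disjoint.preimage _ ∘ disjoint_singleton.2

lemma measurable_cellIndex (h : ℝ) : Measurable (cellIndex (n := n) h) :=
  measurable_pi_lambda _ fun j ↦ Measurable.floor (by fun_prop)

lemma measurableSet_cell (z : Fin n → ℤ) : MeasurableSet (cell h z) :=
  measurable_cellIndex h (measurableSet_singleton z)

lemma convex_cell (hh : 0 < h) (z : Fin n → ℤ) : Convex ℝ (cell h z) := by
  rw [cell_eq_preimage_pi hh]
  exact (convex_pi fun j _ ↦ convex_Ico _ _).linear_preimage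
    (EuclideanSpace.equiv (Fin n) ℝ).toLinearEquiv.toLinearMap

lemma measureReal_cell (hh : 0 < h) (z : Fin n → ℤ) : volume.real (cell h z) = h ^ n := by
  rw [measureReal_def, cell_eq_preimage_pi hh,
    (PiLp.volume_preserving_ofLp (Fin n)).measure_preimage
      (MeasurableSet.univ_pi fun j ↦ measurableSet_Ico).nullMeasurableSet, Real.volume_pi_Ico]
  simp [add_mul, ENNReal.toReal_ofReal hh.le]

lemma dist_le_of_forall_coord {r : ℝ} (hr : 0 ≤ r) {x y : EuclideanSpace ℝ (Fin n)}
    (hxy : ∀ j, |x j - y j| ≤ r) : dist x y ≤ √n * r := by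
  rw [EuclideanSpace.dist_eq, Real.sqrt_le_iff, mul_pow, Real.sq_sqrt n.cast_nonneg]
  refine ⟨by positivity, ?_⟩
  calc ∑ j, dist (x j) (y j) ^ 2 ≤ ∑ _j : Fin n, r ^ 2 := by
        gcongr with j
        exact hxy j
    _ = n * r ^ 2 := by simp

lemma dist_le_of_mem_cell (hh : 0 < h) {z : Fin n → ℤ} {x y : EuclideanSpace ℝ (Fin n)}
    (hx : x ∈ cell h z) (hy : y ∈ cell h z) : dist x y ≤ √n * h := by
  rw [mem_cell_iff hh] at hx hy
  refine dist_le_of_forall_coord hh.le fun j ↦ ?_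
  rw [abs_le]
  constructor <;> linarith [hx j, hy j]

lemma ae_mem_interior_cell (hh : 0 < h) :
    ∀ᵐ x : EuclideanSpace ℝ (Fin n), x ∈ interior (cell h (cellIndex h x)) := by
  have off_frontiers := ae_all_iff.2 fun z : Fin n → ℤ ↦
    measure_eq_zero_iff_ae_notMem.1 ((convex_cell hh z).addHaar_frontier volume)
  filter_upwards [off_frontiers] with x hx
  by_contra hint
  exact hx _ ⟨subset_closure (mem_cell_cellIndex x), hint⟩

lemma finite_cellIndex_image (hh : 0 < h) {A : Set (EuclideanSpace ℝ (Fin n))} (hA : IsBounded A) :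
    (cellIndex h '' A).Finite := by
  obtain ⟨R, hR⟩ := hA.exists_norm_le
  refine (finite_Icc (fun _ ↦ ⌊-R / h⌋) fun _ ↦ ⌊R / h⌋).subset ?_
  rintro _ ⟨x, hx, rfl⟩
  have hxR (j) := abs_le.1 ((PiLp.norm_apply_le x j).trans (hR x hx))
  exact ⟨fun j ↦ Int.floor_le_floor (by gcongr; exact (hxR j).1),
    fun j ↦ Int.floor_le_floor (by gcongr; exact (hxR j).2)⟩

lemma isBounded_cell (hh : 0 < h) (z : Fin n → ℤ) : IsBounded (cell h z) :=
  isBounded_iff.2 ⟨√n * h, fun _ hx _ hy ↦ dist_le_of_mem_cell hh hx hy⟩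

lemma measureReal_biUnion_cell (hh : 0 < h) (F : Finset (Fin n → ℤ)) :
    volume.real (⋃ z ∈ F, cell h z) = F.card * h ^ n := by
  rw [measureReal_biUnion_finset (fun z _ w _ hzw ↦ pairwise_disjoint_cell hzw)
    (fun z _ ↦ measurableSet_cell z) fun z _ ↦ (isBounded_cell hh z).measure_lt_top.ne]
  simp only [measureReal_cell hh, Finset.sum_const, nsmul_eq_mul]

lemma card_mul_le_measureReal (hh : 0 < h) {F : Finset (Fin n → ℤ)}
    {A : Set (EuclideanSpace ℝ (Fin n))} (hA : IsBounded A) (hF : ∀ z ∈ F, cell h z ⊆ A) :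
    F.card * h ^ n ≤ volume.real A := by
  rw [← measureReal_biUnion_cell hh]
  exact measureReal_mono (iUnion₂_subset hF) hA.measure_lt_top.ne

lemma measureReal_le_card_mul (hh : 0 < h) {F : Finset (Fin n → ℤ)}
    {A : Set (EuclideanSpace ℝ (Fin n))} (hF : ∀ x ∈ A, cellIndex h x ∈ F) :
    volume.real A ≤ F.card * h ^ n := by
  rw [← measureReal_biUnion_cell hh]
  exact measureReal_mono (fun x hx ↦ mem_biUnion (hF x hx) (mem_cell_cellIndex x))
    ((isBounded_biUnion_finset F).2 fun z _ ↦ isBounded_cell hh z).measure_lt_top.ne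

lemma card_le_card_of_measureReal_le (hh : 0 < h) {G F : Finset (Fin n → ℤ)}
    {A B : Set (EuclideanSpace ℝ (Fin n))} (hA : IsBounded A) (hG : ∀ z ∈ G, cell h z ⊆ A)
    (hAB : volume.real A ≤ volume.real B) (hF : ∀ x ∈ B, cellIndex h x ∈ F) :
    G.card ≤ F.card := by
  have := (card_mul_le_measureReal hh hA hG).trans (hAB.trans (measureReal_le_card_mul hh hF))
  exact_mod_cast le_of_mul_le_mul_right this (by positivity)

lemma dist_le_of_cellIndex_mem_image_closedBall (hh : 0 < h) {r : ℝ}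
    {x y : EuclideanSpace ℝ (Fin n)} (hx : cellIndex h x ∈ cellIndex h '' closedBall y r) :
    dist x y ≤ √n * h + r := by
  obtain ⟨p, hp, hpx⟩ := hx
  exact (dist_triangle x p y).trans
    (add_le_add (dist_le_of_mem_cell hh (mem_cell_cellIndex x) hpx) hp)

/-- The indices `z` in the grid of side `h` of the `Mⁿ` subcubes of the cube with index `w` in the
coarser grid of side `M * h`. -/
def subcells (M : ℕ) (w : Fin n → ℤ) : Finset (Fin n → ℤ) :=
  Fintype.piFinset fun j ↦ Finset.Ico (M * w j) (M * w j + M)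

lemma card_subcells (M : ℕ) (w : Fin n → ℤ) : (subcells M w).card = M ^ n := by
  simp [subcells]

lemma mem_subcells_iff {M : ℕ} (hM : 0 < M) {w z : Fin n → ℤ} :
    z ∈ subcells M w ↔ ∀ j, z j / M = w j := by
  have hM' : (0 : ℤ) < M := by exact_mod_cast hM
  simp only [subcells, Fintype.mem_piFinset, Finset.mem_Ico]
  refine forall_congr' fun j ↦ ?_
  rw [Int.ediv_eq_iff_of_pos hM']
  constructor <;> rintro ⟨_, _⟩ <;> constructor <;> linarith

lemma disjoint_subcells {M : ℕ} (hM : 0 < M) {v w : Fin n → ℤ} (hvw : v ≠ w) :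
    Disjoint (subcells M v) (subcells M w) :=
  Finset.disjoint_left.2 fun _ hv hw ↦ hvw <| funext fun j ↦
    ((mem_subcells_iff hM).1 hv j).symm.trans ((mem_subcells_iff hM).1 hw j)

lemma cellIndex_mem_subcells_iff {M : ℕ} (hM : 0 < M) {w : Fin n → ℤ}
    {x : EuclideanSpace ℝ (Fin n)} : cellIndex h x ∈ subcells M w ↔ x ∈ cell (M * h) w := by
  simp only [mem_subcells_iff hM, cell, mem_preimage, mem_singleton_iff, funext_iff, cellIndex,
    ← Int.floor_div_natCast, div_div, mul_comm h]

lemma mem_image_closedBall_of_mem_subcells (hh : 0 < h) {M : ℕ} (hM : 0 < M) {w z : Fin n → ℤ}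
    (hz : z ∈ subcells M w) {x y : EuclideanSpace ℝ (Fin n)} (hx : x ∈ cell (M * h) w) {r : ℝ}
    (hxy : dist x y ≤ r) : z ∈ cellIndex h '' closedBall y (√n * (M * h) + r) := by
  obtain ⟨p, rfl⟩ := surjective_cellIndex hh.ne' z
  refine ⟨p, (dist_triangle p x y).trans (add_le_add ?_ hxy), rfl⟩
  exact dist_le_of_mem_cell (by positivity) ((cellIndex_mem_subcells_iff hM).1 hz) hx

/-- The piecewise translation that moves each cube `cell h z` onto `cell h (q z)`. -/
def cellShift (h : ℝ) (q : (Fin n → ℤ) → Fin n → ℤ) (x : EuclideanSpace ℝ (Fin n)) :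
    EuclideanSpace ℝ (Fin n) :=
  x + WithLp.toLp 2 fun j ↦ (q (cellIndex h x) j - cellIndex h x j) * h

lemma cellIndex_cellShift (hh : h ≠ 0) (q : (Fin n → ℤ) → Fin n → ℤ)
    (x : EuclideanSpace ℝ (Fin n)) : cellIndex h (cellShift h q x) = q (cellIndex h x) := by
  ext j
  have : cellShift h q x j / h = x j / h + (q (cellIndex h x) j - cellIndex h x j : ℤ) := by
    simp only [cellShift, PiLp.add_apply, add_div, mul_div_cancel_right₀ _ hh, Int.cast_sub]
  rw [cellIndex, this, Int.floor_add_intCast]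
  exact add_sub_cancel _ _

end Grid
/-! ### Permutations of cubes by volume preserving maps -/

section CellPermutation

variable {n : ℕ} {h : ℝ}

/-- The centre of the cube `cell h z`. -/
def cellCenter (h : ℝ) (z : Fin n → ℤ) : EuclideanSpace ℝ (Fin n) :=
  WithLp.toLp 2 fun j ↦ (z j + 1 / 2) * h

lemma abs_sub_cellCenter_le {r : ℝ} (hh : 0 < h) (hr : 0 < r) {z : Fin n → ℤ}
    {x : EuclideanSpace ℝ (Fin n)} (hx : ball x r ⊆ cell h z) (j : Fin n) :
    |x j - cellCenter h z j| ≤ h / 2 - r / 2 := by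
  have mem_cell_of_abs_lt : ∀ t : ℝ, |t| < r → x + EuclideanSpace.single j t ∈ cell h z :=
    fun t ht ↦ hx (by simpa using ht)
  have upper := ((mem_cell_iff hh).1 (mem_cell_of_abs_lt (r / 2) (by
    rw [abs_of_pos (half_pos hr)]; exact half_lt_self hr)) j).2
  have lower := ((mem_cell_iff hh).1 (mem_cell_of_abs_lt (-(r / 2)) (by
    rw [abs_neg, abs_of_pos (half_pos hr)]; exact half_lt_self hr)) j).1
  simp only [PiLp.add_apply, PiLp.single_apply, if_true] at upper lower
  rw [abs_le, cellCenter]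
  constructor <;> linarith

lemma le_dist_cellCenter_apply (hh : 0 ≤ h) {z w : Fin n → ℤ} {j : Fin n} (hzw : z j ≠ w j) :
    h ≤ dist (cellCenter h z j) (cellCenter h w j) := by
  have one_le : (1 : ℝ) ≤ |(z j : ℝ) - w j| := by
    exact_mod_cast Int.one_le_abs (sub_ne_zero.2 hzw)
  calc h ≤ |(z j : ℝ) - w j| * h := le_mul_of_one_le_left hh one_le
    _ = dist (cellCenter h z j) (cellCenter h w j) := by
      rw [Real.dist_eq, cellCenter, cellCenter, ← sub_mul, add_sub_add_right_eq_sub, abs_mul,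
        abs_of_nonneg hh]

lemma gridSeparated_cellCenter {m : ℕ} {I : Type*} (hh : 0 ≤ h) {P : I → Fin (m + 1) → ℤ}
    (hP : Function.Injective P) :
    GridSeparated (h / 2) fun i ↦
      (cellCenter h (P i) 0, fun j : Fin m ↦ cellCenter h (P i) j.succ) := by
  intro i j hij
  simp only [mul_div_cancel₀ h two_ne_zero]
  by_cases htail : ∃ k : Fin m, P i k.succ ≠ P j k.succ
  · obtain ⟨k, hk⟩ := htail
    exact .inl ((le_dist_cellCenter_apply hh hk).trans (dist_le_pi_dist
      (fun k : Fin m ↦ cellCenter h (P i) k.succ) (fun k ↦ cellCenter h (P j) k.succ) k))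
  · push Not at htail
    refine .inr ⟨funext fun k ↦ by simp only [cellCenter, htail k],
      le_dist_cellCenter_apply hh fun h0 ↦ hP.ne hij ?_⟩
    exact funext fun k ↦ k.cases h0 htail

lemma exists_measurePreserving_equiv_prod (m : ℕ) :
    ∃ e : EuclideanSpace ℝ (Fin (m + 1)) ≃L[ℝ] ℝ × (Fin m → ℝ), MeasurePreserving e ∧
      ∀ x, e x = (x 0, fun j ↦ x j.succ) :=
  ⟨(EuclideanSpace.equiv (Fin (m + 1)) ℝ).trans (Fin.consEquivL ℝ fun _ ↦ ℝ).symm,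
    (volume_preserving_piFinSuccAbove (fun _ ↦ ℝ) 0).comp (PiLp.volume_preserving_ofLp _),
    fun _ ↦ rfl⟩

lemma exists_rearrangement_eq_cellShift (hn : 2 ≤ n) (hh : 0 < h) {I : Set (Fin n → ℤ)}
    (hI : I.Finite) {q : (Fin n → ℤ) → Fin n → ℤ} (hq : InjOn q I) :
    ∃ R : ℝ, ∀ r > 0, ∃ S : EuclideanSpace ℝ (Fin n) → EuclideanSpace ℝ (Fin n),
      IsLipschitzRearrangement S ∧ (∀ x, dist (S x) x ≤ R) ∧
      ∀ x, cellIndex h x ∈ I → ball x r ⊆ cell h (cellIndex h x) → S x = cellShift h q x := by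
  obtain ⟨m, rfl⟩ : ∃ m, n = m + 1 := ⟨n - 1, by lia⟩
  have : Nonempty (Fin m) := ⟨⟨0, by lia⟩⟩
  have : Finite I := hI
  obtain ⟨e, he, e_apply⟩ := exists_measurePreserving_equiv_prod m
  have h_transports : Transports (h / 2) (e ∘ fun i : I ↦ cellCenter h i)
      (e ∘ fun i : I ↦ cellCenter h (q i)) := by
    simp only [Function.comp_def, e_apply]
    exact (gridSeparated_cellCenter hh.le Subtype.val_injective).transports
      (gridSeparated_cellCenter hh.le hq.injective)
  obtain ⟨R, hR⟩ := Transports.conj e he h_transports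
  refine ⟨R, fun r hr ↦ ?_⟩
  obtain ⟨S, hS, hSR, hS_cell⟩ := hR (r / 2) (half_pos hr)
  refine ⟨S, hS, hSR, fun x hxI hxr ↦ ?_⟩
  have near_center := abs_sub_cellCenter_le hh hr hxr
  rw [hS_cell ⟨_, hxI⟩ x, cellShift]
  · congr 1
    ext j
    simp only [cellCenter, PiLp.sub_apply]
    ring
  · rw [e_apply, e_apply, Prod.dist_eq]
    exact max_le (near_center 0) ((dist_pi_le_iff ((abs_nonneg _).trans (near_center 0))).2
      fun j ↦ near_center j.succ)

end CellPermutation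
/-! ### From piecewise translations to rearrangements -/

lemma exists_isCompact_ball_subset {X ι : Type*} [MetricSpace X] [MeasurableSpace X]
    [BorelSpace X] {μ : Measure X} [μ.InnerRegularCompactLTTop] {U : Set X} (hU : MeasurableSet U)
    (hUfin : μ U ≠ ⊤) {W : ι → Set X} (hW : ∀ i, IsOpen (W i))
    (hWU : ∀ᵐ x ∂μ.restrict U, ∃ i, x ∈ W i) {κ : ℝ} (hκ : 0 < κ) :
    ∃ K ⊆ U, IsCompact K ∧ μ.real (U \ K) ≤ κ ∧ ∃ r > 0, ∀ x ∈ K, ∃ i, ball x r ⊆ W i := by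
  obtain ⟨K, hKW, hK, hμK⟩ := (hU.inter (isOpen_iUnion hW).measurableSet).exists_isCompact_sdiff_lt
    (measure_ne_top_of_subset inter_subset_left hUfin) (ENNReal.ofReal_pos.2 hκ).ne'
  refine ⟨K, hKW.trans inter_subset_left, hK, ?_,
    lebesgue_number_lemma_of_metric hK hW (hKW.trans inter_subset_right)⟩
  refine ENNReal.toReal_le_of_le_ofReal hκ.le (le_trans (measure_mono_ae ?_) hμK.le)
  filter_upwards [(ae_restrict_iff' hU).1 hWU] with x hx hxK
  exact ⟨⟨hxK.1, mem_iUnion.2 (hx hxK.1)⟩, hxK.2⟩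

lemma setIntegral_le_add_mul_measureReal {X : Type*} [MeasurableSpace X] {μ : Measure X}
    {U A : Set X} (hU : MeasurableSet U) (hUfin : μ U ≠ ⊤) (hA : MeasurableSet A) {f g : X → ℝ}
    {c : ℝ} (hf : ∀ x, 0 ≤ f x) (hg : IntegrableOn g U μ)
    (hfg : ∀ x ∈ U, f x ≤ g x + A.indicator (fun _ ↦ c) x) :
    ∫ x in U, f x ∂μ ≤ ∫ x in U, g x ∂μ + c * μ.real (U ∩ A) := by
  have h_indicator : IntegrableOn (A.indicator fun _ ↦ c) U μ :=
    (integrableOn_const hUfin).indicator hA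
  calc ∫ x in U, f x ∂μ ≤ ∫ x in U, (g x + A.indicator (fun _ ↦ c) x) ∂μ :=
        integral_mono_of_nonneg (.of_forall hf) (hg.add h_indicator)
          ((ae_restrict_iff' hU).2 (.of_forall hfg))
    _ = ∫ x in U, g x ∂μ + c * μ.real (U ∩ A) := by
      rw [integral_add hg h_indicator, integral_indicator_const _ hA,
        measureReal_restrict_apply hA, inter_comm, smul_eq_mul, mul_comm c]

section CellShift

variable {n : ℕ} {h : ℝ} {U : Set (EuclideanSpace ℝ (Fin n))}
  {u : EuclideanSpace ℝ (Fin n) → EuclideanSpace ℝ (Fin n)}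

lemma integrableOn_norm_sub_cellShift (hU : MeasurableSet U) (hUb : IsBounded U) (hh : 0 < h)
    (q : (Fin n → ℤ) → Fin n → ℤ) (hu : ContinuousOn u U) (hub : IsBounded (u '' U)) :
    IntegrableOn (fun x ↦ ‖u x - cellShift h q x‖) U := by
  let v (z : Fin n → ℤ) : EuclideanSpace ℝ (Fin n) := WithLp.toLp 2 fun j ↦ (q z j - z j) * h
  have measurable_shift : Measurable fun x ↦ v (cellIndex h x) :=
    (measurable_of_countable v).comp (measurable_cellIndex h)
  obtain ⟨Cu, hCu⟩ := hub.exists_norm_le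
  obtain ⟨CU, hCU⟩ := hUb.exists_norm_le
  obtain ⟨Cv, hCv⟩ := ((finite_cellIndex_image hh hUb).image v).isBounded.exists_norm_le
  refine .of_bound hUb.measure_lt_top ((hu.aestronglyMeasurable hU).sub
    (measurable_id.add measurable_shift).aestronglyMeasurable).norm (Cu + (CU + Cv))
    ((ae_restrict_iff' hU).2 (.of_forall fun x hx ↦ ?_))
  rw [norm_norm]
  exact (norm_sub_le _ _).trans (add_le_add (hCu _ (mem_image_of_mem u hx))
    ((norm_add_le _ _).trans (add_le_add (hCU x hx)
      (hCv _ (mem_image_of_mem v (mem_image_of_mem _ hx))))))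

lemma exists_rearrangement_integral_le_integral_cellShift_add (hn : 2 ≤ n) (hU : MeasurableSet U)
    (hUb : IsBounded U) (hh : 0 < h) {q : (Fin n → ℤ) → Fin n → ℤ}
    (hq : InjOn q (cellIndex h '' U)) (hu : ContinuousOn u U) (hub : IsBounded (u '' U))
    {ε : ℝ} (hε : 0 < ε) :
    ∃ S : EuclideanSpace ℝ (Fin n) → EuclideanSpace ℝ (Fin n), IsLipschitzRearrangement S ∧
      ∫ x in U, ‖u x - S x‖ ≤ (∫ x in U, ‖u x - cellShift h q x‖) + ε := by
  have hUfin : volume U ≠ ⊤ := hUb.measure_lt_top.ne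
  obtain ⟨R, hR⟩ := exists_rearrangement_eq_cellShift hn hh (finite_cellIndex_image hh hUb) hq
  obtain ⟨Cu, hCu⟩ := hub.exists_norm_le
  obtain ⟨CU, hCU⟩ := hUb.exists_norm_le
  obtain ⟨κ, hκ, hκε⟩ := exists_pos_mul_lt hε (max 0 (Cu + CU + R))
  obtain ⟨K, _, hK, hUK, r, hr, hKr⟩ := exists_isCompact_ball_subset hU hUfin
    (fun z : Fin n → ℤ ↦ isOpen_interior (s := cell h z))
    (ae_restrict_of_ae ((ae_mem_interior_cell hh).mono fun x hx ↦ ⟨_, hx⟩)) hκ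
  obtain ⟨S, hS, hSR, hS_eq⟩ := hR r hr
  have pointwise : ∀ x ∈ U, ‖u x - S x‖ ≤
      ‖u x - cellShift h q x‖ + Kᶜ.indicator (fun _ ↦ max 0 (Cu + CU + R)) x := fun x hx ↦ by
    by_cases hxK : x ∈ K
    · obtain ⟨z, hz⟩ := hKr x hxK
      have hxz : x ∈ cell h z := interior_subset (hz (mem_ball_self hr))
      have ball_subset : ball x r ⊆ cell h (cellIndex h x) := by
        rw [eq_of_mem_singleton hxz]
        exact hz.trans interior_subset
      rw [hS_eq x (mem_image_of_mem _ hx) ball_subset,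
        indicator_of_notMem (notMem_compl_iff.2 hxK), add_zero]
    · rw [indicator_of_mem hxK]
      calc ‖u x - S x‖ ≤ ‖u x‖ + ‖x‖ + dist (S x) x := by
            rw [dist_comm, dist_eq_norm]
            exact (norm_sub_le_norm_sub_add_norm_sub _ x _).trans
              (add_le_add_left (norm_sub_le _ _) _)
        _ ≤ Cu + CU + R := add_le_add_three (hCu _ (mem_image_of_mem u hx)) (hCU x hx) (hSR x)
        _ ≤ ‖u x - cellShift h q x‖ + max 0 (Cu + CU + R) :=
          (le_max_right _ _).trans (le_add_of_nonneg_left (norm_nonneg _))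
  refine ⟨S, hS, (setIntegral_le_add_mul_measureReal hU hUfin hK.measurableSet.compl
    (fun x ↦ norm_nonneg _) (integrableOn_norm_sub_cellShift hU hUb hh q hu hub)
    pointwise).trans ?_⟩
  gcongr
  exact (mul_le_mul_of_nonneg_left hUK (le_max_left _ _)).trans hκε.le

end CellShift
/-! ### Assigning fine cubes to coarse cubes -/

section Assignment

variable {α β ι : Type*} [Nonempty β]

lemma exists_injOn_mapsTo_eqOn {s t : Finset α} {F : Finset β} {f : α → β} (hst : s ⊆ t)
    (hf : InjOn f s) (hfF : MapsTo f s F) (hcard : t.card ≤ F.card) :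
    ∃ g : α → β, InjOn g t ∧ MapsTo g t F ∧ EqOn g f s := by
  classical
  have hsF : s.image f ⊆ F := Finset.image_subset_iff.2 hfF
  have hcard' : ((t \ s : Finset α) : Set α).encard ≤
      ((F \ s.image f : Finset β) : Set β).encard := by
    rw [encard_coe_eq_coe_finsetCard, encard_coe_eq_coe_finsetCard, Finset.card_sdiff_of_subset hst,
      Finset.card_sdiff_of_subset hsF, Finset.card_image_of_injOn hf]
    exact_mod_cast Nat.sub_le_sub_right hcard _
  obtain ⟨g, hgF, hg⟩ := (t \ s).finite_toSet.exists_injOn_of_encard_le hcard'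
  have g_mem {z : α} (hz : z ∈ t) (hzs : z ∉ s) : g z ∈ F ∧ g z ∉ s.image f :=
    Finset.mem_sdiff.1 (hgF (Finset.mem_sdiff.2 ⟨hz, hzs⟩))
  refine ⟨s.piecewise f g, fun a ha b hb hab ↦ ?_, fun z hz ↦ ?_,
    fun z hz ↦ s.piecewise_eq_of_mem f g hz⟩
  · by_cases has : a ∈ s <;> by_cases hbs : b ∈ s <;>
      simp only [Finset.piecewise, has, hbs, if_true, if_false] at hab
    · exact hf has hbs hab
    · exact absurd (hab ▸ Finset.mem_image_of_mem f has) (g_mem hb hbs).2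
    · exact absurd (hab ▸ Finset.mem_image_of_mem f hbs) (g_mem ha has).2
    · exact hg (Finset.mem_sdiff.2 ⟨ha, has⟩) (Finset.mem_sdiff.2 ⟨hb, hbs⟩) hab
  · by_cases hzs : z ∈ s
    · rw [s.piecewise_eq_of_mem f g hzs]
      exact hfF hzs
    · rw [s.piecewise_eq_of_notMem f g hzs]
      exact (g_mem hz hzs).1

variable [DecidableEq ι]

/-- The number of points of `G` in excess of `N` in the fibres of `w`. -/
def overflow (G : Finset α) (w : α → ι) (N : ℕ) : ℕ :=
  ∑ v ∈ G.image w, ((G.filter fun z ↦ w z = v).card - N)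

lemma exists_subset_injOn_mem_card_sdiff_le_overflow [DecidableEq α] (G : Finset α) (w : α → ι)
    {T : ι → Finset β} (hT : Pairwise (Function.onFun Disjoint T)) {N : ℕ}
    (hN : ∀ v, (T v).card = N) :
    ∃ A ⊆ G, (G \ A).card ≤ overflow G w N ∧
      ∃ q : α → β, InjOn q A ∧ ∀ z ∈ A, q z ∈ T (w z) := by
  let fibre (v : ι) : Finset α := G.filter fun z ↦ w z = v
  have fibrewise (v : ι) : ∃ A, (fibre v \ A).card = (fibre v).card - N ∧
      ∃ q : α → β, (A : Set α) ⊆ q ⁻¹' T v ∧ InjOn q A := by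
    obtain ⟨A, hA, hA_card⟩ := Finset.exists_subset_card_eq (min_le_left (fibre v).card N)
    refine ⟨A, ?_, A.finite_toSet.exists_injOn_of_encard_le ?_⟩
    · rw [Finset.card_sdiff_of_subset hA, hA_card]
      lia
    · rw [encard_coe_eq_coe_finsetCard, encard_coe_eq_coe_finsetCard, hA_card, hN]
      exact_mod_cast min_le_right _ _
  choose A hA_card q hqT hq using fibrewise
  refine ⟨G.filter fun z ↦ z ∈ A (w z), Finset.filter_subset _ _, ?_, fun z ↦ q (w z) z, ?_,
    fun z hz ↦ hqT _ (Finset.mem_filter.1 hz).2⟩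
  · rw [overflow, Finset.card_eq_sum_card_fiberwise (f := w) (t := G.image w) fun z hz ↦
      Finset.mem_coe.2 (Finset.mem_image_of_mem w (Finset.mem_sdiff.1 hz).1)]
    refine Finset.sum_le_sum fun v _ ↦ (hA_card v).symm ▸ Finset.card_le_card fun z hz ↦ ?_
    obtain ⟨⟨hzG, hzA⟩, rfl⟩ : (z ∈ G ∧ ¬(z ∈ G ∧ z ∈ A (w z))) ∧ w z = v := by
      simpa only [Finset.mem_filter, Finset.mem_sdiff] using hz
    exact Finset.mem_sdiff.2 ⟨Finset.mem_filter.2 ⟨hzG, rfl⟩, fun h ↦ hzA ⟨hzG, h⟩⟩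
  · intro a ha b hb (hab : q (w a) a = q (w b) b)
    have haA := (Finset.mem_filter.1 ha).2
    have hbA := (Finset.mem_filter.1 hb).2
    have hwab : w a = w b := by
      by_contra hne
      exact Finset.disjoint_left.1 (hT hne) (hqT _ haA) (hab ▸ hqT _ hbA)
    rw [← hwab] at hbA hab
    exact hq _ haA hbA hab

lemma exists_injOn_assignment {G I : Finset α} (hGI : G ⊆ I) (w : α → ι)
    {T : ι → Finset β} (hT : Pairwise (Function.onFun Disjoint T)) {N : ℕ}
    (hN : ∀ v, (T v).card = N) {F F' : Finset β} (hTF : ∀ z ∈ G, T (w z) ⊆ F)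
    (hGF : G.card ≤ F.card) (hF : F ⊆ F') (hIF' : I.card ≤ F'.card) :
    ∃ q : α → β, InjOn q I ∧ MapsTo q I F' ∧ MapsTo q G F ∧
      ∃ B : Finset α, B.card ≤ overflow G w N ∧ ∀ z ∈ G, z ∉ B → q z ∈ T (w z) := by
  classical
  obtain ⟨A, hAG, hA_card, q₀, hq₀, hq₀T⟩ :=
    exists_subset_injOn_mem_card_sdiff_le_overflow G w hT hN
  obtain ⟨q₁, hq₁, hq₁F, hq₁_eq⟩ := exists_injOn_mapsTo_eqOn hAG hq₀
    (fun z hz ↦ hTF z (hAG hz) (hq₀T z hz)) hGF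
  obtain ⟨q, hq, hqF', hq_eq⟩ := exists_injOn_mapsTo_eqOn hGI hq₁ (hq₁F.mono_right hF) hIF'
  refine ⟨q, hq, hqF', hq₁F.congr hq_eq.symm, G \ A, hA_card, fun z hz hzB ↦ ?_⟩
  have hzA : z ∈ A := by simpa [hz] using hzB
  rw [hq_eq hz, hq₁_eq hzA]
  exact hq₀T z hzA

end Assignment
/-! ### Approximation by piecewise translations -/

section Approximation

variable {n : ℕ} {U : Set (EuclideanSpace ℝ (Fin n))}
  {u : EuclideanSpace ℝ (Fin n) → EuclideanSpace ℝ (Fin n)} {K : NNReal}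

lemma exists_compact_cell_subset_preimage_cell (hUo : IsOpen U) (hUb : IsBounded U)
    (hu : LipschitzOnWith K u U) (hdet : ∀ᵐ x ∂volume.restrict U, (fderiv ℝ u x).det ≠ 0)
    {H κ : ℝ} (hH : 0 < H) (hκ : 0 < κ) :
    ∃ M > 0, ∃ h > 0, (M : ℕ) * h = H ∧ ∃ C ⊆ U, MeasurableSet C ∧ volume.real (U \ C) ≤ κ ∧
      ∀ z ∈ cellIndex h '' C, ∃ w, cell h z ⊆ U ∩ u ⁻¹' cell H w := by
  have ae_mem_interior : ∀ᵐ x ∂volume.restrict U, ∃ w : Fin n → ℤ,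
      x ∈ U ∩ u ⁻¹' interior (cell H w) := by
    rw [ae_restrict_iff' hUo.measurableSet]
    filter_upwards [measure_eq_zero_iff_ae_notMem.1 <| addHaar_inter_preimage_eq_zero hUo hu hdet
      (ae_iff.1 (ae_mem_interior_cell hH))] with x hx hxU
    exact ⟨cellIndex H (u x), hxU, not_not.1 fun h ↦ hx ⟨hxU, h⟩⟩
  obtain ⟨C, hCU, hC, hUC, r, hr, hCr⟩ := exists_isCompact_ball_subset hUo.measurableSet
    hUb.measure_lt_top.ne
    (fun w ↦ hu.continuousOn.isOpen_inter_preimage hUo isOpen_interior) ae_mem_interior hκ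
  obtain ⟨M, hM⟩ := exists_nat_gt (√n * H / r)
  have hM_pos : (0 : ℝ) < M := (by positivity : 0 ≤ √n * H / r).trans_lt hM
  refine ⟨M, by exact_mod_cast hM_pos, H / M, by positivity, mul_div_cancel₀ _ hM_pos.ne', C, hCU,
    hC.measurableSet, hUC, forall_mem_image.2 fun x hx ↦ ?_⟩
  obtain ⟨w, hw⟩ := hCr x hx
  refine ⟨w, fun y hy ↦ ?_⟩
  have hyx : dist y x < r := by
    refine (dist_le_of_mem_cell (by positivity) hy (mem_cell_cellIndex x)).trans_lt ?_
    rwa [← mul_div_assoc, div_lt_comm₀ hM_pos hr]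
  exact ⟨(hw hyx).1, interior_subset (s := cell H w) (hw hyx).2⟩

lemma card_sub_mul_le_setIntegral (hUo : IsOpen U) (hUb : IsBounded U)
    (hu : LipschitzOnWith K u U) (hub : IsBounded (u '' U))
    (hu_inj : ∀ᵐ y, (U ∩ u ⁻¹' {y}).Subsingleton) {M : ℕ} {h : ℝ} (hM : 0 < M) (hh : 0 < h)
    {G : Finset (Fin n → ℤ)} {v : Fin n → ℤ}
    (hG : ∀ z ∈ G, cell h z ⊆ U ∩ u ⁻¹' cell (M * h) v) :
    ((G.card - M ^ n : ℕ) : ℝ) * h ^ n ≤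
      ∫ x in U ∩ u ⁻¹' cell (M * h) v, max (1 - |(fderiv ℝ u x).det|) 0 := by
  have hMh : 0 < M * h := by positivity
  have bounded : IsBounded (U ∩ u ⁻¹' cell (M * h) v) := hUb.subset inter_subset_left
  rcases le_total G.card (M ^ n) with hle | hle
  · rw [Nat.sub_eq_zero_of_le hle, Nat.cast_zero, zero_mul]
    exact integral_nonneg fun x ↦ le_max_right _ _
  calc ((G.card - M ^ n : ℕ) : ℝ) * h ^ n = G.card * h ^ n - (M * h) ^ n := by
        push_cast [hle]
        ring
    _ ≤ volume.real (U ∩ u ⁻¹' cell (M * h) v) - volume.real (cell (M * h) v) := by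
      rw [measureReal_cell hMh]
      gcongr
      exact card_mul_le_measureReal hh bounded hG
    _ ≤ ∫ x in U ∩ u ⁻¹' cell (M * h) v, max (1 - |(fderiv ℝ u x).det|) 0 :=
      measureReal_sub_measureReal_le_setIntegral hUo hu hu_inj hub.measure_lt_top.ne
        (measurableSet_inter_preimage hu.continuousOn hUo.measurableSet (measurableSet_cell v))
        inter_subset_left bounded.measure_lt_top.ne (image_subset_iff.2 inter_subset_right)
        (isBounded_cell hMh v).measure_lt_top.ne

lemma overflow_mul_le_setIntegral (hUo : IsOpen U) (hUb : IsBounded U)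
    (hu : LipschitzOnWith K u U) (hub : IsBounded (u '' U))
    (hu_inj : ∀ᵐ y, (U ∩ u ⁻¹' {y}).Subsingleton) {M : ℕ} {h : ℝ} (hM : 0 < M) (hh : 0 < h)
    {G : Finset (Fin n → ℤ)} {w : (Fin n → ℤ) → Fin n → ℤ}
    (hG : ∀ z ∈ G, cell h z ⊆ U ∩ u ⁻¹' cell (M * h) (w z)) :
    overflow G w (M ^ n) * h ^ n ≤ ∫ x in U, max (1 - |(fderiv ℝ u x).det|) 0 := by
  let E (v : Fin n → ℤ) : Set (EuclideanSpace ℝ (Fin n)) := U ∩ u ⁻¹' cell (M * h) v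
  let f (x : EuclideanSpace ℝ (Fin n)) : ℝ := max (1 - |(fderiv ℝ u x).det|) 0
  have f_nonneg (x) : 0 ≤ f x := le_max_right _ _
  have integrableOn_f : IntegrableOn f U := ((integrableOn_const hUb.measure_lt_top.ne).sub
    (integrableOn_det_fderiv hUo hu hu_inj hub.measure_lt_top.ne).abs).pos_part
  have measurableSet_E (v) : MeasurableSet (E v) :=
    measurableSet_inter_preimage hu.continuousOn hUo.measurableSet (measurableSet_cell v)
  have pairwise_disjoint_E : Pairwise (Function.onFun Disjoint E) := fun v v' hvv' ↦
    ((pairwise_disjoint_cell hvv').preimage u).mono inter_subset_right inter_subset_right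
  calc overflow G w (M ^ n) * h ^ n
      = ∑ v ∈ G.image w, (((G.filter fun z ↦ w z = v).card - M ^ n : ℕ) : ℝ) * h ^ n := by
        rw [overflow, Nat.cast_sum, Finset.sum_mul]
    _ ≤ ∑ v ∈ G.image w, ∫ x in E v, f x := by
      refine Finset.sum_le_sum fun v _ ↦
        card_sub_mul_le_setIntegral hUo hUb hu hub hu_inj hM hh fun z hz ↦ ?_
      obtain ⟨hzG, rfl⟩ := Finset.mem_filter.1 hz
      exact hG z hzG
    _ = ∫ x in ⋃ v ∈ G.image w, E v, f x :=
      (integral_biUnion_finset _ (fun v _ ↦ measurableSet_E v)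
        (pairwise_disjoint_E.set_pairwise _)
        fun v _ ↦ integrableOn_f.mono_set inter_subset_left).symm
    _ ≤ ∫ x in U, f x := setIntegral_mono_set integrableOn_f (.of_forall f_nonneg)
      (iUnion₂_subset fun v _ ↦ inter_subset_left).eventuallyLE

lemma exists_injOn_cellIndex_mem_subcells (hUo : IsOpen U) (hUb : IsBounded U)
    (hu : LipschitzOnWith K u U) (hub : IsBounded (u '' U))
    (hu_inj : ∀ᵐ y, (U ∩ u ⁻¹' {y}).Subsingleton) {y : EuclideanSpace ℝ (Fin n)} {R ρ : ℝ}
    (hUR : volume.real U ≤ volume.real (closedBall y R)) (huR : u '' U ⊆ closedBall y R)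
    (hUρ : U ⊆ closedBall y ρ) {M : ℕ} {h : ℝ} (hM : 0 < M) (hh : 0 < h)
    {G : Finset (Fin n → ℤ)} {w : (Fin n → ℤ) → Fin n → ℤ}
    (hG : ∀ z ∈ G, cell h z ⊆ U ∩ u ⁻¹' cell (M * h) (w z)) :
    ∃ q : (Fin n → ℤ) → Fin n → ℤ, InjOn q (cellIndex h '' U) ∧
      MapsTo q (cellIndex h '' U) (cellIndex h '' closedBall y (max (√n * (M * h) + R) ρ)) ∧
      MapsTo q G (cellIndex h '' closedBall y (√n * (M * h) + R)) ∧
      ∃ B : Finset (Fin n → ℤ),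
        B.card * h ^ n ≤ ∫ x in U, max (1 - |(fderiv ℝ u x).det|) 0 ∧
        ∀ z ∈ G, z ∉ B → q z ∈ subcells M (w z) := by
  have ball_indices (r : ℝ) :
      ∃ F : Finset (Fin n → ℤ), (F : Set _) = cellIndex h '' closedBall y r :=
    (finite_cellIndex_image hh isBounded_closedBall).exists_finset_coe
  obtain ⟨I, hI⟩ := (finite_cellIndex_image hh hUb).exists_finset_coe
  obtain ⟨F, hF⟩ := ball_indices (√n * (M * h) + R)
  obtain ⟨F', hF'⟩ := ball_indices (max (√n * (M * h) + R) ρ)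
  have exists_mem (z) (hz : z ∈ G) : ∃ x ∈ U, cellIndex h x = z ∧ u x ∈ cell (M * h) (w z) := by
    obtain ⟨x, rfl⟩ := surjective_cellIndex hh.ne' z
    exact ⟨x, (hG _ hz (mem_cell_cellIndex x)).1, rfl, (hG _ hz (mem_cell_cellIndex x)).2⟩
  have G_subset : G ⊆ I := fun z hz ↦ by
    obtain ⟨x, hx, hxz, -⟩ := exists_mem z hz
    rw [← Finset.mem_coe, hI]
    exact ⟨x, hx, hxz⟩
  have subcells_subset (z) (hz : z ∈ G) : subcells M (w z) ⊆ F := fun z' hz' ↦ by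
    obtain ⟨x, hx, -, hxw⟩ := exists_mem z hz
    rw [← Finset.mem_coe, hF]
    exact mem_image_closedBall_of_mem_subcells hh hM hz' hxw (huR (mem_image_of_mem u hx))
  have card_le : G.card ≤ F.card :=
    card_le_card_of_measureReal_le hh hUb (fun z hz ↦ (hG z hz).trans inter_subset_left) hUR
      fun x hx ↦ by
        rw [← Finset.mem_coe, hF]
        exact ⟨x, closedBall_subset_closedBall (le_add_of_nonneg_left (by positivity)) hx, rfl⟩
  have F_subset : F ⊆ F' := Finset.coe_subset.1 <| hF ▸ hF' ▸
    image_mono (closedBall_subset_closedBall (le_max_left _ _))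
  have I_subset : I ⊆ F' := Finset.coe_subset.1 <| hI ▸ hF' ▸
    image_mono (hUρ.trans (closedBall_subset_closedBall (le_max_right _ _)))
  obtain ⟨q, hq, hqI, hqG, B, hB, hqB⟩ := exists_injOn_assignment G_subset w
    (fun _ _ ↦ disjoint_subcells hM) (card_subcells M) subcells_subset card_le
    F_subset (Finset.card_le_card I_subset)
  rw [hI] at hq hqI
  rw [hF'] at hqI
  rw [hF] at hqG
  exact ⟨q, hq, hqI, hqG, B, (mul_le_mul_of_nonneg_right (Nat.cast_le.2 hB) (by positivity)).trans
      (overflow_mul_le_setIntegral hUo hUb hu hub hu_inj hM hh hG), hqB⟩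

lemma norm_sub_cellShift_le_of_mapsTo {y : EuclideanSpace ℝ (Fin n)} {d r h : ℝ}
    (hud : u '' U ⊆ closedBall y d) (hh : 0 < h) {s : Set (EuclideanSpace ℝ (Fin n))}
    {q : (Fin n → ℤ) → Fin n → ℤ} (hq : MapsTo q (cellIndex h '' s) (cellIndex h '' closedBall y r))
    {x : EuclideanSpace ℝ (Fin n)} (hxU : x ∈ U) (hx : x ∈ s) :
    ‖u x - cellShift h q x‖ ≤ d + (√n * h + r) := by
  have hqx : dist (cellShift h q x) y ≤ √n * h + r := by
    apply dist_le_of_cellIndex_mem_image_closedBall hh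
    rw [cellIndex_cellShift hh.ne']
    exact hq (mem_image_of_mem _ hx)
  rw [← dist_eq_norm]
  exact (dist_triangle_right _ _ y).trans (add_le_add (hud (mem_image_of_mem u hxU)) hqx)

lemma norm_sub_cellShift_le_of_mem_subcells {M : ℕ} {h : ℝ} (hM : 0 < M) (hh : 0 < h)
    {x : EuclideanSpace ℝ (Fin n)} {w : Fin n → ℤ} (hx : u x ∈ cell (M * h) w)
    {q : (Fin n → ℤ) → Fin n → ℤ} (hq : q (cellIndex h x) ∈ subcells M w) :
    ‖u x - cellShift h q x‖ ≤ √n * (M * h) := by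
  rw [← cellIndex_cellShift hh.ne' q, cellIndex_mem_subcells_iff hM] at hq
  exact dist_eq_norm (u x) _ ▸ dist_le_of_mem_cell (by positivity) hx hq

-- `V` is the union of the fine cubes in excess, `W` the complement of a set all of whose points
-- lie in fine cubes that `u` maps into coarse cubes.
lemma exists_cellShift_forall_norm_sub_le (hUo : IsOpen U) (hUb : IsBounded U)
    (hu : LipschitzOnWith K u U) (hub : IsBounded (u '' U))
    (hu_inj : ∀ᵐ y, (U ∩ u ⁻¹' {y}).Subsingleton)
    (hdet : ∀ᵐ x ∂volume.restrict U, (fderiv ℝ u x).det ≠ 0)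
    {y : EuclideanSpace ℝ (Fin n)} {d R ρ : ℝ} (hd : 0 ≤ d) (hud : u '' U ⊆ closedBall y d)
    (hdR : d ≤ R) (hUR : volume.real U ≤ volume.real (closedBall y R)) (hUρ : U ⊆ closedBall y ρ)
    {H κ : ℝ} (hH : 0 < H) (hκ : 0 < κ) :
    ∃ h > 0, ∃ q : (Fin n → ℤ) → Fin n → ℤ, InjOn q (cellIndex h '' U) ∧
      ∃ V W : Set (EuclideanSpace ℝ (Fin n)), MeasurableSet V ∧ MeasurableSet W ∧
        volume.real (U ∩ V) ≤ ∫ x in U, max (1 - |(fderiv ℝ u x).det|) 0 ∧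
        volume.real (U ∩ W) ≤ κ ∧
        ∀ x ∈ U, ‖u x - cellShift h q x‖ ≤ √n * H +
          V.indicator (fun _ ↦ d + (√n * H + (√n * H + R))) x +
          W.indicator (fun _ ↦ d + (√n * H + max (√n * H + R) ρ)) x := by
  obtain ⟨M, hM, h, hh, rfl, C, hCU, hC, hUC, hCw⟩ :=
    exists_compact_cell_subset_preimage_cell hUo hUb hu hdet hH hκ
  choose! w hw using hCw
  obtain ⟨G, hG⟩ := ((finite_cellIndex_image hh hUb).subset (image_mono hCU)).exists_finset_coe
  obtain ⟨q, hq, hqU, hqG, B, hB, hqB⟩ := exists_injOn_cellIndex_mem_subcells hUo hUb hu hub hu_inj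
    hUR (hud.trans (closedBall_subset_closedBall hdR)) hUρ hM hh fun z hz ↦ hw z (hG ▸ hz)
  rw [hG] at hqG
  refine ⟨h, hh, q, hq, ⋃ z ∈ B, cell h z, Cᶜ, B.measurableSet_biUnion fun z _ ↦
    measurableSet_cell z, hC.compl, ?_, hUC, fun x hx ↦ ?_⟩
  · rw [← measureReal_biUnion_cell hh] at hB
    exact (measureReal_mono inter_subset_right
      ((isBounded_biUnion_finset B).2 fun z _ ↦ isBounded_cell hh z).measure_lt_top.ne).trans hB
  have fine_le_coarse : √n * h ≤ √n * (M * h) :=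
    mul_le_mul_of_nonneg_left (le_mul_of_one_le_left hh.le (by exact_mod_cast hM)) (by positivity)
  have coarse_nonneg : 0 ≤ √n * (M * h) := by positivity
  have indicator_overflow_nonneg := (⋃ z ∈ B, cell h z).indicator_nonneg
    (f := fun _ ↦ d + (√n * (M * h) + (√n * (M * h) + R))) (fun _ _ ↦ by linarith) x
  by_cases hxC : x ∈ C
  · rw [indicator_of_notMem (s := Cᶜ) (notMem_compl_iff.2 hxC), add_zero]
    have hxG := mem_image_of_mem (cellIndex h) hxC
    by_cases hxB : cellIndex h x ∈ B
    · rw [indicator_of_mem (mem_iUnion₂.2 ⟨_, hxB, mem_cell_cellIndex x⟩)]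
      linarith [norm_sub_cellShift_le_of_mapsTo hud hh hqG hx hxC]
    · linarith [norm_sub_cellShift_le_of_mem_subcells hM hh (hw _ hxG (mem_cell_cellIndex x)).2
        (hqB _ (Finset.mem_coe.1 (hG ▸ hxG)) hxB)]
  · rw [indicator_of_mem (s := Cᶜ) hxC]
    linarith [norm_sub_cellShift_le_of_mapsTo hud hh hqU hx hx]

theorem exists_cellShift_integral_le (hUo : IsOpen U) (hUb : IsBounded U)
    (hu : LipschitzOnWith K u U) (hub : IsBounded (u '' U))
    (hu_inj : ∀ᵐ y, (U ∩ u ⁻¹' {y}).Subsingleton)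
    (hdet : ∀ᵐ x ∂volume.restrict U, (fderiv ℝ u x).det ≠ 0)
    {y : EuclideanSpace ℝ (Fin n)} {d R : ℝ} (hd : 0 ≤ d) (hud : u '' U ⊆ closedBall y d)
    (hdR : d ≤ R) (hUR : volume.real U ≤ volume.real (closedBall y R)) {ε : ℝ} (hε : 0 < ε) :
    ∃ h > 0, ∃ q : (Fin n → ℤ) → Fin n → ℤ, InjOn q (cellIndex h '' U) ∧
      ∫ x in U, ‖u x - cellShift h q x‖ ≤
        (d + R) * (∫ x in U, max (1 - |(fderiv ℝ u x).det|) 0) + ε := by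
  have hUfin : volume U ≠ ⊤ := hUb.measure_lt_top.ne
  obtain ⟨ρ, hUρ⟩ := hUb.subset_closedBall y
  set m := ∫ x in U, max (1 - |(fderiv ℝ u x).det|) 0
  obtain ⟨H, hH, hHε⟩ := exists_pos_mul_lt (half_pos hε) (√n * (volume.real U + 2 * m))
  set c := d + (√n * H + max (√n * H + R) ρ)
  have sH_nonneg : 0 ≤ √n * H := by positivity
  have c_nonneg : 0 ≤ c := by linarith [le_max_left (√n * H + R) ρ]
  obtain ⟨κ, hκ, hκε⟩ := exists_pos_mul_lt (half_pos hε) c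
  obtain ⟨h, hh, q, hq, V, W, hV, hW, hUV, hUW, pointwise⟩ :=
    exists_cellShift_forall_norm_sub_le hUo hUb hu hub hu_inj hdet hd hud hdR hUR hUρ hH hκ
  refine ⟨h, hh, q, hq, ?_⟩
  set c' := d + (√n * H + (√n * H + R))
  have c'_nonneg : 0 ≤ c' := by linarith
  have integrableOn_sH : IntegrableOn (fun _ ↦ √n * H) U := integrableOn_const hUfin
  calc ∫ x in U, ‖u x - cellShift h q x‖
      ≤ (∫ x in U, (√n * H + V.indicator (fun _ ↦ c') x)) + c * volume.real (U ∩ W) :=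
        setIntegral_le_add_mul_measureReal hUo.measurableSet hUfin hW (fun _ ↦ norm_nonneg _)
          (integrableOn_sH.add ((integrableOn_const hUfin).indicator hV)) pointwise
    _ ≤ (∫ _ in U, √n * H) + c' * volume.real (U ∩ V) + c * volume.real (U ∩ W) := by
      gcongr
      exact setIntegral_le_add_mul_measureReal hUo.measurableSet hUfin hV
        (fun x ↦ add_nonneg sH_nonneg (indicator_nonneg (fun _ _ ↦ c'_nonneg) x))
        integrableOn_sH fun _ _ ↦ le_rfl
    _ ≤ volume.real U * (√n * H) + c' * m + c * κ := by
      rw [setIntegral_const, smul_eq_mul]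
      gcongr
    _ = (d + R) * m + √n * (volume.real U + 2 * m) * H + c * κ := by ring
    _ ≤ (d + R) * m + ε := by linarith

end Approximation
/-! ### The approximation theorem -/

section Main

variable {n : ℕ} {U : Set (EuclideanSpace ℝ (Fin n))}
  {u : EuclideanSpace ℝ (Fin n) → EuclideanSpace ℝ (Fin n)} {K : NNReal}

lemma measureReal_closedBall_div_rpow (hn : n ≠ 0) (y : EuclideanSpace ℝ (Fin n)) {d lam : ℝ}
    (hd : 0 ≤ d) (hlam : 0 < lam) :
    volume.real (closedBall y (d / lam ^ (n : ℝ)⁻¹)) = volume.real (closedBall y d) / lam := by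
  rw [Measure.addHaar_real_closedBall _ _ (by positivity), Measure.addHaar_real_closedBall _ _ hd,
    finrank_euclideanSpace_fin, div_pow, Real.rpow_inv_natCast_pow hlam.le hn, div_mul_eq_mul_div]

lemma measureReal_le_measureReal_closedBall_div_rpow (hn : n ≠ 0) (hUo : IsOpen U)
    (hu : LipschitzOnWith K u U) (hu_inj : ∀ᵐ y, (U ∩ u ⁻¹' {y}).Subsingleton)
    {y : EuclideanSpace ℝ (Fin n)} {d lam : ℝ} (hd : 0 ≤ d) (hud : u '' U ⊆ closedBall y d)
    (hlam : 0 < lam) (hdet : ∀ᵐ x ∂volume.restrict U, lam ≤ |(fderiv ℝ u x).det|) :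
    volume.real U ≤ volume.real (closedBall y (d / lam ^ (n : ℝ)⁻¹)) := by
  rw [measureReal_closedBall_div_rpow hn y hd hlam, le_div_iff₀' hlam]
  exact mul_measureReal_le_of_image_subset hUo hu hu_inj hlam.le hdet hUo.measurableSet le_rfl hud
    measure_closedBall_lt_top.ne

lemma exists_isLipschitzRearrangement_integral_le_add (hn : 2 ≤ n) (hUo : IsOpen U)
    (hUb : IsBounded U) (hu : LipschitzOnWith K u U) (hub : IsBounded (u '' U))
    (hu_inj : ∀ᵐ y, (U ∩ u ⁻¹' {y}).Subsingleton)
    (hdet : ∀ᵐ x ∂volume.restrict U, (fderiv ℝ u x).det ≠ 0)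
    {y : EuclideanSpace ℝ (Fin n)} {d R : ℝ} (hd : 0 ≤ d) (hud : u '' U ⊆ closedBall y d)
    (hdR : d ≤ R) (hUR : volume.real U ≤ volume.real (closedBall y R)) {ε : ℝ} (hε : 0 < ε) :
    ∃ S, IsLipschitzRearrangement S ∧ ∫ x in U, ‖u x - S x‖ ≤
      (d + R) * (∫ x in U, max (1 - |(fderiv ℝ u x).det|) 0) + ε := by
  obtain ⟨h, hh, q, hq, integral_cellShift_le⟩ :=
    exists_cellShift_integral_le hUo hUb hu hub hu_inj hdet hd hud hdR hUR (half_pos hε)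
  obtain ⟨S, hS, integral_le⟩ := exists_rearrangement_integral_le_integral_cellShift_add hn
    hUo.measurableSet hUb hh hq hu.continuousOn hub (half_pos hε)
  exact ⟨S, hS, by linarith⟩

lemma mul_integral_max_one_sub_det_le (hn : n ≠ 0)
    (hdet_int : IntegrableOn (fun x ↦ 1 - (fderiv ℝ u x).det) U) {d lam : ℝ} (hd : 0 ≤ d)
    (hlam : 0 < lam) (hdet : ∀ᵐ x ∂volume.restrict U, lam ≤ |(fderiv ℝ u x).det|) :
    (d + max d (d / lam ^ (n : ℝ)⁻¹)) * (∫ x in U, max (1 - |(fderiv ℝ u x).det|) 0) ≤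
      2 * (d / lam ^ (n : ℝ)⁻¹) * ∫ x in U, |1 - (fderiv ℝ u x).det| := by
  rcases le_total 1 lam with hlam1 | hlam1
  · have max_eq_zero : (fun x ↦ max (1 - |(fderiv ℝ u x).det|) 0) =ᵐ[volume.restrict U] 0 :=
      hdet.mono fun x hx ↦ max_eq_right (sub_nonpos.2 (hlam1.trans hx))
    rw [integral_congr_ae max_eq_zero, Pi.zero_def, integral_zero, mul_zero]
    positivity
  · have d_le : d ≤ d / lam ^ (n : ℝ)⁻¹ :=
      le_div_self hd (by positivity) (Real.rpow_le_one hlam.le hlam1 (by positivity))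
    rw [max_eq_right d_le]
    refine mul_le_mul (by linarith) ?_ (integral_nonneg fun x ↦ le_max_right _ _) (by positivity)
    refine integral_mono_of_nonneg (.of_forall fun x ↦ le_max_right _ _) hdet_int.abs
      (.of_forall fun x ↦ max_le ?_ (abs_nonneg _))
    simpa only [abs_one] using abs_sub_abs_le_abs_sub 1 (fderiv ℝ u x).det

theorem exists_isAdmissible_integral_le_of_two_le (hn : 2 ≤ n) (hne : U.Nonempty) (hUo : IsOpen U)
    (hUb : IsBounded U) (hu : LipschitzOnWith K u U) (hub : IsBounded (u '' U))
    (hu_inj : multOn U u = 1) {d lam : ℝ} (hd : diam (u '' U) ≤ d) (hlam : 0 < lam)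
    (hdet : ∀ᵐ x ∂volume.restrict U, lam ≤ |(fderiv ℝ u x).det|) :
    ∃ S, IsAdmissible U S ∧ ∫ x in U, ‖u x - S x‖ ≤
      3 * (d / lam ^ (n : ℝ)⁻¹) * ∫ x in U, |1 - (fderiv ℝ u x).det| := by
  have hn0 : n ≠ 0 := by lia
  have hinj := ae_subsingleton_of_multOn_eq_one hu_inj
  have integrableOn_one_sub_det : IntegrableOn (fun x ↦ 1 - (fderiv ℝ u x).det) U :=
    (integrableOn_const hUb.measure_lt_top.ne).sub
      (integrableOn_det_fderiv hUo hu hinj hub.measure_lt_top.ne)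
  set J := ∫ x in U, |1 - (fderiv ℝ u x).det|
  rcases (integral_nonneg fun _ ↦ abs_nonneg _ : 0 ≤ J).eq_or_lt with hJ | hJ
  · have det_eq_one : ∀ᵐ x ∂volume.restrict U, |(fderiv ℝ u x).det| = 1 :=
      ((integral_eq_zero_iff_of_nonneg (fun _ ↦ abs_nonneg _) integrableOn_one_sub_det.abs).1
        hJ.symm).mono fun x hx ↦ by rw [← sub_eq_zero.1 (abs_eq_zero.1 hx), abs_one]
    exact ⟨u, isAdmissible_of_abs_det_fderiv_eq_one hUo hu hub hu_inj det_eq_one, by simp [J, ← hJ]⟩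
  have hd0 : 0 ≤ d := diam_nonneg.trans hd
  obtain ⟨x, hx⟩ := hne
  have image_subset : u '' U ⊆ closedBall (u x) d := fun z hz ↦
    (dist_le_diam_of_mem hub hz (mem_image_of_mem u hx)).trans hd
  have measure_le :=
    measureReal_le_measureReal_closedBall_div_rpow hn0 hUo hu hinj hd0 image_subset hlam hdet
  have d_pos : 0 < d := by
    refine hd0.lt_of_ne' ?_
    rintro rfl
    rw [zero_div, Measure.addHaar_real_closedBall _ _ le_rfl, finrank_euclideanSpace_fin,
      zero_pow hn0, zero_mul] at measure_le
    exact (ENNReal.toReal_pos (hUo.measure_pos volume ⟨x, hx⟩).ne'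
      hUb.measure_lt_top.ne).not_ge measure_le
  obtain ⟨S, hS, integral_le⟩ := exists_isLipschitzRearrangement_integral_le_add hn hUo hUb hu hub
    hinj (hdet.mono fun x hx ↦ abs_pos.1 (hlam.trans_le hx)) hd0 image_subset (le_max_left d _)
    (measure_le.trans (measureReal_mono (closedBall_subset_closedBall (le_max_right d _))
      measure_closedBall_lt_top.ne)) (ε := d / lam ^ (n : ℝ)⁻¹ * J) (by positivity)
  refine ⟨S, hS.isAdmissible ⟨x, hx⟩ hUo hUb, integral_le.trans ?_⟩
  linarith [mul_integral_max_one_sub_det_le hn0 integrableOn_one_sub_det hd0 hlam hdet]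

end Main

theorem stmt_5_general (n : ℕ) (hn : 1 ≤ n)
    (U : Set (EuclideanSpace ℝ (Fin n))) (hne : U.Nonempty) (hUo : IsOpen U)
    (hUb : IsBounded U) (hUc : n = 1 → IsPreconnected U)
    (u : EuclideanSpace ℝ (Fin n) → EuclideanSpace ℝ (Fin n)) (K : NNReal)
    (hu : LipschitzOnWith K u U) (hub : IsBounded (u '' U))
    (hinj : multOn U u = 1)
    (d lam : ℝ)
    (hd : diam (u '' U) ≤ d)
    (hlam : 0 < lam)
    (hdet : ∀ᵐ x ∂(volume.restrict U), lam ≤ |detD u x|) :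
    ∃ S, IsAdmissible U S ∧
      (∫ x in U, ‖u x - S x‖) ≤ 3 * (d / lam ^ ((n : ℝ))⁻¹) * ∫ x in U, |1 - detD u x| := by
  rcases hn.eq_or_lt' with rfl | hn
  · obtain ⟨S, hS, integral_le⟩ :=
      exists_isAdmissible_integral_le_fin_one hne hUo hUb (hUc rfl) hu hub hinj hd hlam hdet
    have hd0 : 0 ≤ d := diam_nonneg.trans hd
    refine ⟨S, hS, integral_le.trans ?_⟩
    rw [Nat.cast_one, inv_one, Real.rpow_one]
    exact mul_le_mul_of_nonneg_right (by gcongr; norm_num) (integral_nonneg fun _ ↦ abs_nonneg _)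
  · exact exists_isAdmissible_integral_le_of_two_le hn hne hUo hUb hu hub hinj hd hlam hdet

theorem stmt_5 (n : ℕ) (hn : 1 ≤ n)
    (U : Set (EuclideanSpace ℝ (Fin n))) (hne : U.Nonempty) (hUo : IsOpen U)
    (hUb : IsBounded U) (hUc : IsConnected U)
    (u : EuclideanSpace ℝ (Fin n) → EuclideanSpace ℝ (Fin n)) (K : NNReal)
    (hu : LipschitzOnWith K u U) (hub : IsBounded (u '' U))
    (hinj : multOn U u = 1)
    (d lam : ℝ)
    (hd : diam (u '' U) ≤ d)
    (hlam : 0 < lam)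
    (hdet : ∀ᵐ x ∂(volume.restrict U), DifferentiableAt ℝ u x ∧ lam ≤ detD u x) :
    ∃ (S : EuclideanSpace ℝ (Fin n) → EuclideanSpace ℝ (Fin n)) (Ks : NNReal),
      LipschitzOnWith Ks S U ∧ IsBounded (S '' U) ∧
      multOn U S = 1 ∧
      (∃ B : Set (EuclideanSpace ℝ (Fin n)), MeasurableSet B ∧
        Measure.map S (volume.restrict U) = volume.restrict B) ∧
      (∫ x in U, ‖u x - S x‖)
        ≤ 10 * (d / lam ^ ((n : ℝ))⁻¹) * (1 + lam⁻¹) *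
          ∫ x in U, |1 - detD u x| := by
  obtain ⟨S, ⟨⟨Ks, hKs⟩, hSb, hS_inj, hSB⟩, integral_le⟩ := stmt_5_general n hn U hne hUo hUb
    (fun _ ↦ hUc.isPreconnected) u K hu hub hinj d lam hd hlam
    (hdet.mono fun x hx ↦ hx.2.trans (le_abs_self _))
  refine ⟨S, Ks, hKs, hSb, hS_inj, hSB, integral_le.trans ?_⟩
  have ratio_nonneg : 0 ≤ d / lam ^ (n : ℝ)⁻¹ := div_nonneg (diam_nonneg.trans hd) (by positivity)
  refine mul_le_mul_of_nonneg_right ?_ (integral_nonneg fun _ ↦ abs_nonneg _)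
  nlinarith [mul_nonneg ratio_nonneg (inv_nonneg.2 hlam.le)]

end
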